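/- arXiv:2205.12166 — 2 statements merged into one kernel-verified Lean document; each statement's English description precedes it below -/
import Mathlib

section
/- For λ ≥ 0 and p, q ∈ {1,…,N} define the 2-point function G_{|pq|}(λ) := (1/N)·∂²(log Z)/∂J_{pq}∂K_{qp} evaluated at (J,K) = (0,0). Then G_{|pq|}(0) = 1/(E_p+Ẽ_q), and lim_{λ→0⁺} (G_{|pq|}(λ) − 1/(E_p+Ẽ_q))/λ = −(1/(E_p+Ẽ_q)²)·(1/N)·( Σ_{l=1}^N 1/(E_p+Ẽ_l) + Σ_{k=1}^N 1/(E_k+Ẽ_q) ). -/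
/-!
For `λ ≥ 0` the weight `exp(-N S)` is dominated by its Gaussian part, so the partition function may
be differentiated under the integral in the sources (`LSZ.hasDerivAt_source`). The one-point
functions vanish under `Φ ↦ -Φ`, hence `G_{|pq|}(λ) = N ⟨|Φ_{pq}|²⟩_λ` (`LSZ.lszG2_eq`).

As `Tr((Φ*Φ)²) ≥ 0`, dominated convergence gives the right derivative at `λ = 0` of every
unnormalised moment (`LSZ.hasDerivWithinAt_coupling`), so the first-order coefficient is
`-N²/2` times the connected Gaussian correlator of `|Φ_{pq}|²` with `Tr((Φ*Φ)²)`.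

This correlator is computed term by term (`LSZ.mom_vert_connected`). A term
`conj Φ_{ai} Φ_{aj} conj Φ_{bj} Φ_{bi}` with `a ≠ b` and `i ≠ j` is odd in `Φ_{ai}` and does not
contribute. The other terms are monomials in the variables `|Φ_{nm}|²`, which are independent
exponential variables of mean `1 / (N (E_n + Ẽ_m))` under the normalised Gaussian weight;
their moments follow from the recursion `LSZ.mom_mono_succ`.
-/

open MeasureTheory Matrix

/-- The LSZ action `S(Φ) = Σ_{m,n} (E_n + Ẽ_m)|Φ_{nm}|² + (λ/2)·Tr((Φ*Φ)²)`,
viewed as a complex number. -/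
noncomputable def lszAction (N : ℕ) (E Et : Fin N → ℝ) (lam : ℝ)
    (Φ : Fin N → Fin N → ℂ) : ℂ :=
  (∑ n, ∑ m, (((E n + Et m : ℝ)) : ℂ) * ((Complex.normSq (Φ n m) : ℝ) : ℂ))
    + ((lam / 2 : ℝ) : ℂ) *
      ((((Matrix.of Φ)ᴴ * Matrix.of Φ) * ((Matrix.of Φ)ᴴ * Matrix.of Φ)).trace)

/-- The integrand of the LSZ partition function with sources `J`, `K`. -/
noncomputable def lszIntegrand (N : ℕ) (E Et : Fin N → ℝ) (lam : ℝ)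
    (J K : Fin N → Fin N → ℂ) (Φ : Fin N → Fin N → ℂ) : ℂ :=
  Complex.exp (-(N : ℂ) * lszAction N E Et lam Φ
    + (N : ℂ) * ((∑ m, ∑ n, J n m * (starRingEnd ℂ) (Φ n m))
      + ∑ m, ∑ n, K m n * Φ n m))

/-- The LSZ partition function `Z(J,K)`. -/
noncomputable def lszZ (N : ℕ) (E Et : Fin N → ℝ) (lam : ℝ)
    (J K : Fin N → Fin N → ℂ) : ℂ :=
  ∫ Φ : Fin N → Fin N → ℂ, lszIntegrand N E Et lam J K Φ

/-- The elementary matrix with a single `1` at position `(a,b)`. -/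
def eMat (N : ℕ) (a b : Fin N) : Fin N → Fin N → ℂ :=
  fun i j => if i = a ∧ j = b then 1 else 0

/-- The holomorphic partial derivative `∂/∂J_{ab}` of a function of `(J,K)`. -/
noncomputable def dJ (N : ℕ) (a b : Fin N)
    (f : (Fin N → Fin N → ℂ) → (Fin N → Fin N → ℂ) → ℂ) :
    (Fin N → Fin N → ℂ) → (Fin N → Fin N → ℂ) → ℂ :=
  fun J K => deriv (fun t : ℂ => f (J + t • eMat N a b) K) 0

/-- The holomorphic partial derivative `∂/∂K_{ab}` of a function of `(J,K)`. -/
noncomputable def dK (N : ℕ) (a b : Fin N)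
    (f : (Fin N → Fin N → ℂ) → (Fin N → Fin N → ℂ) → ℂ) :
    (Fin N → Fin N → ℂ) → (Fin N → Fin N → ℂ) → ℂ :=
  fun J K => deriv (fun t : ℂ => f J (K + t • eMat N a b)) 0

/-- The 2-point function `G_{|pq|}(λ) = (1/N)·∂²(log Z)/∂J_{pq}∂K_{qp}|_{J=K=0}`. -/
noncomputable def lszG2 (N : ℕ) (E Et : Fin N → ℝ) (p q : Fin N) (lam : ℝ) : ℂ :=
  (1 / (N : ℂ)) *
    dJ N p q (dK N q p (fun J K => Complex.log (lszZ N E Et lam J K))) 0 0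

namespace LSZ

variable {N : ℕ}

/-! ### Observables of at most exponential growth -/

/-- The entrywise `ℓ¹` size of a matrix. -/
noncomputable def size (Φ : Fin N → Fin N → ℂ) : ℝ := ∑ n, ∑ m, ‖Φ n m‖

/-- Continuous observables of at most exponential growth; all of them are integrable against
the Gaussian weight. -/
def Tame (f : (Fin N → Fin N → ℂ) → ℂ) : Prop :=
  Continuous f ∧ ∃ C d : ℝ, 0 ≤ C ∧ 0 ≤ d ∧ ∀ Φ, ‖f Φ‖ ≤ C * Real.exp (d * size Φ)

lemma size_nonneg (Φ : Fin N → Fin N → ℂ) : 0 ≤ size Φ :=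
  Finset.sum_nonneg fun _ _ => Finset.sum_nonneg fun _ _ => norm_nonneg _

lemma entry_le_size (Φ : Fin N → Fin N → ℂ) (a b : Fin N) : ‖Φ a b‖ ≤ size Φ := by
  unfold size
  calc ‖Φ a b‖ ≤ ∑ m, ‖Φ a m‖ :=
        Finset.single_le_sum (f := fun m => ‖Φ a m‖) (fun _ _ => norm_nonneg _) (Finset.mem_univ b)
    _ ≤ _ := Finset.single_le_sum (f := fun n => ∑ m, ‖Φ n m‖)
        (fun _ _ => Finset.sum_nonneg fun _ _ => norm_nonneg _) (Finset.mem_univ a)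

lemma Tame.const (z : ℂ) : Tame (fun _ : Fin N → Fin N → ℂ => z) :=
  ⟨continuous_const, ‖z‖, 0, norm_nonneg _, le_rfl, fun Φ => by simp⟩

lemma Tame.entry (a b : Fin N) : Tame (fun Φ : Fin N → Fin N → ℂ => Φ a b) := by
  refine ⟨by fun_prop, 1, 1, zero_le_one, zero_le_one, fun Φ => ?_⟩
  have := entry_le_size Φ a b
  have := Real.add_one_le_exp (size Φ)
  simp only [one_mul]
  linarith

lemma Tame.conj {f : (Fin N → Fin N → ℂ) → ℂ} (hf : Tame f) :
    Tame (fun Φ => (starRingEnd ℂ) (f Φ)) := by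
  obtain ⟨h, C, d, hC, hd, hb⟩ := hf
  exact ⟨Complex.continuous_conj.comp h, C, d, hC, hd, fun Φ => by simpa using hb Φ⟩

lemma Tame.mul {f g : (Fin N → Fin N → ℂ) → ℂ} (hf : Tame f) (hg : Tame g) :
    Tame (fun Φ => f Φ * g Φ) := by
  obtain ⟨h, C, d, hC, hd, hb⟩ := hf
  obtain ⟨h', C', d', hC', hd', hb'⟩ := hg
  refine ⟨h.mul h', C * C', d + d', by positivity, by positivity, fun Φ => ?_⟩
  rw [norm_mul, add_mul, Real.exp_add]
  calc _ ≤ (C * Real.exp (d * size Φ)) * (C' * Real.exp (d' * size Φ)) :=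
        mul_le_mul (hb Φ) (hb' Φ) (norm_nonneg _) (by positivity)
    _ = _ := by ring

lemma Tame.add {f g : (Fin N → Fin N → ℂ) → ℂ} (hf : Tame f) (hg : Tame g) :
    Tame (fun Φ => f Φ + g Φ) := by
  obtain ⟨h, C, d, hC, hd, hb⟩ := hf
  obtain ⟨h', C', d', hC', hd', hb'⟩ := hg
  refine ⟨h.add h', C + C', d + d', by positivity, by positivity, fun Φ => ?_⟩
  have hs := size_nonneg Φ
  calc ‖f Φ + g Φ‖ ≤ C * Real.exp (d * size Φ) + C' * Real.exp (d' * size Φ) :=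
        (norm_add_le _ _).trans (add_le_add (hb Φ) (hb' Φ))
    _ ≤ C * Real.exp ((d + d') * size Φ) + C' * Real.exp ((d + d') * size Φ) := by
        gcongr <;> linarith
    _ = _ := by ring

lemma Tame.sum {ι : Type*} (s : Finset ι) {f : ι → (Fin N → Fin N → ℂ) → ℂ}
    (hf : ∀ i, Tame (f i)) : Tame (fun Φ => ∑ i ∈ s, f i Φ) := by
  classical
  induction s using Finset.induction_on with
  | empty => simpa using Tame.const 0
  | insert i s hi ih =>
    simp only [Finset.sum_insert hi]
    exact (hf i).add ih

/-- The exponential of the modulus of an observable of linear growth is tame. -/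
lemma Tame.exp_norm {l : (Fin N → Fin N → ℂ) → ℂ} (hl : Continuous l) {L : ℝ} (hL : 0 ≤ L)
    (hb : ∀ Φ, ‖l Φ‖ ≤ L * size Φ) (r : ℝ) (hr : 0 ≤ r) :
    Tame (fun Φ => ((Real.exp (r * ‖l Φ‖) : ℝ) : ℂ)) := by
  refine ⟨by fun_prop, 1, r * L, zero_le_one, by positivity, fun Φ => ?_⟩
  rw [Complex.norm_real, Real.norm_of_nonneg (Real.exp_pos _).le, one_mul, mul_assoc]
  exact Real.exp_le_exp.2 (mul_le_mul_of_nonneg_left (hb Φ) hr)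

/-! ### The Gaussian weight and the quartic interaction -/

/-- The quadratic form `∑ c_{nm} |Φ_{nm}|²`. -/
noncomputable def quad (c : Fin N → Fin N → ℝ) (Φ : Fin N → Fin N → ℂ) : ℝ :=
  ∑ n, ∑ m, c n m * ‖Φ n m‖ ^ 2

/-- The quartic interaction `Tr((Φ*Φ)²)`, written as the manifestly non-negative squared
Hilbert–Schmidt norm of `Φ*Φ`. -/
noncomputable def quart (Φ : Fin N → Fin N → ℂ) : ℝ :=
  ∑ i, ∑ j, Complex.normSq (∑ a, (starRingEnd ℂ) (Φ a i) * Φ a j)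

/-- The Boltzmann weight with quadratic form `c` and quartic coupling `g`. -/
noncomputable def weight (c : Fin N → Fin N → ℝ) (g : ℝ) (Φ : Fin N → Fin N → ℂ) : ℝ :=
  Real.exp (-quad c Φ - g * quart Φ)

/-- The unnormalised expectation of the observable `f`. -/
noncomputable def mom (c : Fin N → Fin N → ℝ) (g : ℝ) (f : (Fin N → Fin N → ℂ) → ℂ) : ℂ :=
  ∫ Φ, f Φ * (weight c g Φ : ℂ)

lemma quart_nonneg (Φ : Fin N → Fin N → ℂ) : 0 ≤ quart Φ :=
  Finset.sum_nonneg fun _ _ => Finset.sum_nonneg fun _ _ => Complex.normSq_nonneg _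

lemma quart_eq_sum (Φ : Fin N → Fin N → ℂ) :
    (quart Φ : ℂ) = ∑ i, ∑ j, ∑ a, ∑ b,
      ((starRingEnd ℂ) (Φ a i) * Φ a j) * ((starRingEnd ℂ) (Φ b j) * Φ b i) := by
  unfold quart
  push_cast
  refine Finset.sum_congr rfl fun i _ => Finset.sum_congr rfl fun j _ => ?_
  rw [Complex.normSq_eq_conj_mul_self, mul_comm, map_sum, Finset.sum_mul_sum]
  simp [mul_comm]

lemma quart_eq_trace (Φ : Fin N → Fin N → ℂ) :
    (((Matrix.of Φ)ᴴ * Matrix.of Φ) * ((Matrix.of Φ)ᴴ * Matrix.of Φ)).trace = (quart Φ : ℂ) := by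
  rw [quart_eq_sum]
  simp only [Matrix.trace, Matrix.diag, Matrix.mul_apply, Matrix.conjTranspose_apply,
    Matrix.of_apply, Finset.sum_mul_sum]
  rfl

lemma quart_tame : Tame (fun Φ : Fin N → Fin N → ℂ => (quart Φ : ℂ)) := by
  simp only [quart_eq_sum]
  exact Tame.sum _ fun i => Tame.sum _ fun j => Tame.sum _ fun a => Tame.sum _ fun b =>
    ((Tame.entry a i).conj.mul (Tame.entry a j)).mul ((Tame.entry b j).conj.mul (Tame.entry b i))

lemma continuous_weight (c : Fin N → Fin N → ℝ) (g : ℝ) : Continuous (weight c g) := by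
  unfold weight quad quart
  have := Complex.continuous_normSq
  fun_prop

lemma weight_pos (c : Fin N → Fin N → ℝ) (g : ℝ) (Φ : Fin N → Fin N → ℂ) : 0 < weight c g Φ :=
  Real.exp_pos _

lemma weight_le (c : Fin N → Fin N → ℝ) {g : ℝ} (hg : 0 ≤ g) (Φ : Fin N → Fin N → ℂ) :
    weight c g Φ ≤ weight c 0 Φ := by
  refine Real.exp_le_exp.2 ?_
  have := mul_nonneg hg (quart_nonneg Φ)
  linarith

lemma weight_zero_eq_prod (c : Fin N → Fin N → ℝ) (Φ : Fin N → Fin N → ℂ) :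
    weight c 0 Φ = ∏ n, ∏ m, Real.exp (-c n m * ‖Φ n m‖ ^ 2) := by
  simp [weight, quad, Real.exp_sum, ← Finset.sum_neg_distrib]

lemma integrable_one_site {c : ℝ} (hc : 0 < c) (d : ℝ) :
    Integrable (fun z : ℂ => Real.exp (d * ‖z‖) * Real.exp (-c * ‖z‖ ^ 2)) := by
  have h0 : Integrable (fun z : ℂ => Real.exp (-(c / 2) * ‖z‖ ^ 2)) := by
    have := (GaussianFourier.integrable_cexp_neg_mul_sq_norm_add (V := ℂ) (b := ((c / 2 : ℝ) : ℂ))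
      (by simpa using hc) 0 0).norm
    refine this.congr (ae_of_all _ fun z => ?_)
    simp only [Complex.norm_exp]
    congr 1
    have : (-((c / 2 : ℝ) : ℂ) * (‖z‖ : ℂ) ^ 2 + 0 * ((inner ℝ (0 : ℂ) z : ℝ) : ℂ))
      = ((-(c / 2) * ‖z‖ ^ 2 : ℝ) : ℂ) := by push_cast; ring
    rw [this, Complex.ofReal_re]
  refine (h0.const_mul (Real.exp (d ^ 2 / (2 * c)))).mono' (by fun_prop) (ae_of_all _ fun z => ?_)
  rw [Real.norm_of_nonneg (by positivity), ← Real.exp_add, ← Real.exp_add]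
  refine Real.exp_le_exp.2 ?_
  -- complete the square in `‖z‖`
  have h : d ^ 2 / (2 * c) + -(c / 2) * ‖z‖ ^ 2 - (d * ‖z‖ + -c * ‖z‖ ^ 2)
      = (d - c * ‖z‖) ^ 2 / (2 * c) := by field_simp; ring
  have : 0 ≤ (d - c * ‖z‖) ^ 2 / (2 * c) := by positivity
  linarith

lemma Tame.integrable {c : Fin N → Fin N → ℝ} (hc : ∀ n m, 0 < c n m) {g : ℝ} (hg : 0 ≤ g)
    {f : (Fin N → Fin N → ℂ) → ℂ} (hf : Tame f) :
    Integrable (fun Φ => f Φ * (weight c g Φ : ℂ)) := by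
  obtain ⟨h, C, d, hC, hd, hb⟩ := hf
  have h0 : Integrable (fun Φ : Fin N → Fin N → ℂ =>
      ∏ n, ∏ m, (Real.exp (d * ‖Φ n m‖) * Real.exp (-c n m * ‖Φ n m‖ ^ 2))) :=
    Integrable.fintype_prod (f := fun n (x : Fin N → ℂ) =>
      ∏ m, (Real.exp (d * ‖x m‖) * Real.exp (-c n m * ‖x m‖ ^ 2))) fun n =>
      Integrable.fintype_prod (f := fun m (z : ℂ) =>
        (Real.exp (d * ‖z‖) * Real.exp (-c n m * ‖z‖ ^ 2))) fun m =>
        integrable_one_site (hc n m) d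
  refine (h0.const_mul C).mono'
    (h.mul (Complex.continuous_ofReal.comp (continuous_weight c g))).aestronglyMeasurable
    (ae_of_all _ fun Φ => ?_)
  rw [norm_mul, Complex.norm_real, Real.norm_of_nonneg (weight_pos _ _ _).le]
  simp only [Finset.prod_mul_distrib]
  rw [← weight_zero_eq_prod, ← mul_assoc]
  refine mul_le_mul ((hb Φ).trans (le_of_eq ?_)) (weight_le c hg Φ) (weight_pos _ _ _).le
    (by positivity)
  simp [size, Finset.mul_sum, Real.exp_sum]

lemma mom_one_pos {c : Fin N → Fin N → ℝ} (hc : ∀ n m, 0 < c n m) {g : ℝ} (hg : 0 ≤ g) :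
    ∃ r : ℝ, 0 < r ∧ mom c g (fun _ => 1) = r := by
  refine ⟨∫ Φ, weight c g Φ, ?_, ?_⟩
  · have := ((Tame.const (N := N) 1).integrable hc hg).re
    simp only [one_mul, RCLike.re_to_complex, Complex.ofReal_re] at this
    have hrow : (volume : Measure (Fin N → ℂ)).IsOpenPosMeasure :=
      Measure.pi.isOpenPosMeasure _
    have hmat : (volume : Measure (Fin N → Fin N → ℂ)).IsOpenPosMeasure :=
      Measure.pi.isOpenPosMeasure _
    have hne : NeZero (volume : Measure (Fin N → Fin N → ℂ)) :=
      ⟨fun h => isOpen_univ.measure_ne_zero volume Set.univ_nonempty (by rw [h]; rfl)⟩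
    exact integral_exp_pos this
  · simp only [mom, one_mul]
    exact integral_ofReal

/-! ### Derivatives of the generating function -/

/-- Differentiation under the integral sign with respect to a linear source. -/
lemma hasDerivAt_source {c : Fin N → Fin N → ℝ} (hc : ∀ n m, 0 < c n m) {g : ℝ} (hg : 0 ≤ g)
    {f l : (Fin N → Fin N → ℂ) → ℂ} (hf : Tame f) (hl : Tame l) {L : ℝ} (hL : 0 ≤ L)
    (hb : ∀ Φ, ‖l Φ‖ ≤ L * size Φ) (t₀ : ℂ) :
    HasDerivAt (fun t : ℂ => mom c g (fun Φ => f Φ * Complex.exp (t * l Φ)))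
      (mom c g (fun Φ => f Φ * l Φ * Complex.exp (t₀ * l Φ))) t₀ := by
  have hcw := Complex.continuous_ofReal.comp (continuous_weight c g)
  have hfc := hf.1
  have hlc := hl.1
  have hexp : ∀ t : ℂ, ‖t‖ ≤ ‖t₀‖ + 1 → ∀ Φ,
      ‖Complex.exp (t * l Φ)‖ ≤ Real.exp ((‖t₀‖ + 1) * ‖l Φ‖) := fun t ht Φ => by
    refine (Complex.norm_exp_le_exp_norm _).trans (Real.exp_le_exp.2 ?_)
    rw [norm_mul]
    gcongr
  have hE := Tame.exp_norm hlc hL hb (‖t₀‖ + 1) (by positivity)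
  have key := hasDerivAt_integral_of_dominated_loc_of_deriv_le (μ := volume) (𝕜 := ℂ)
    (F := fun t Φ => f Φ * Complex.exp (t * l Φ) * (weight c g Φ : ℂ))
    (F' := fun t Φ => f Φ * l Φ * Complex.exp (t * l Φ) * (weight c g Φ : ℂ))
    (x₀ := t₀) (s := Metric.ball t₀ 1)
    (bound := fun Φ => ‖f Φ * l Φ * ((Real.exp ((‖t₀‖ + 1) * ‖l Φ‖) : ℝ) : ℂ)
      * (weight c g Φ : ℂ)‖)
    (Metric.ball_mem_nhds _ one_pos) ?_ ?_ ?_ ?_ ?_ ?_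
  · exact key.2
  · refine Filter.Eventually.of_forall fun t => Continuous.aestronglyMeasurable ?_
    exact (hfc.mul (by fun_prop)).mul hcw
  · refine ((hf.mul hE).integrable hc hg).mono
      ((hfc.mul (by fun_prop)).mul hcw).aestronglyMeasurable (ae_of_all _ fun Φ => ?_)
    rw [norm_mul, norm_mul, norm_mul, norm_mul]
    gcongr
    rw [Complex.norm_real, Real.norm_of_nonneg (Real.exp_pos _).le]
    exact hexp t₀ (by linarith) Φ
  · exact (((hfc.mul hlc).mul (by fun_prop)).mul hcw).aestronglyMeasurable
  · refine ae_of_all _ fun Φ t ht => ?_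
    rw [norm_mul, norm_mul _ (Complex.exp _), norm_mul _ (weight c g Φ : ℂ),
      norm_mul _ (((Real.exp _ : ℝ) : ℂ))]
    gcongr
    rw [Complex.norm_real, Real.norm_of_nonneg (Real.exp_pos _).le]
    refine hexp t ?_ Φ
    have h1 : ‖t - t₀‖ < 1 := by simpa [dist_eq_norm] using ht
    have h2 := norm_add_le (t - t₀) t₀
    rw [sub_add_cancel] at h2
    linarith
  · exact (((hf.mul hl).mul hE).integrable hc hg).norm
  · refine ae_of_all _ fun Φ t _ => ?_
    have h1 : HasDerivAt (fun t : ℂ => Complex.exp (t * l Φ))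
        (Complex.exp (t * l Φ) * (1 * l Φ)) t := ((hasDerivAt_id t).mul_const (l Φ)).cexp
    convert! (h1.const_mul (f Φ)).mul_const (weight c g Φ : ℂ) using 1
    ring

/-- One-sided differentiability in the quartic coupling at zero coupling; dominated convergence
applies because `0 ≤ 1 - e^{-gV} ≤ gV`. -/
lemma hasDerivWithinAt_coupling {c : Fin N → Fin N → ℝ} (hc : ∀ n m, 0 < c n m)
    {f : (Fin N → Fin N → ℂ) → ℂ} (hf : Tame f) :
    HasDerivWithinAt (fun g : ℝ => mom c g f)
      (-mom c 0 (fun Φ => f Φ * (quart Φ : ℂ))) (Set.Ioi 0) 0 := by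
  rw [hasDerivWithinAt_iff_tendsto_slope' (by simp)]
  have hq := (hf.mul quart_tame).integrable hc le_rfl
  have hlim : Filter.Tendsto (fun g : ℝ => ∫ Φ : Fin N → Fin N → ℂ,
      (g : ℂ)⁻¹ * (f Φ * (weight c g Φ : ℂ) - f Φ * (weight c 0 Φ : ℂ)))
      (nhdsWithin 0 (Set.Ioi 0))
      (nhds (∫ Φ, -(f Φ * (quart Φ : ℂ) * (weight c 0 Φ : ℂ)))) := by
    refine tendsto_integral_filter_of_dominated_convergence
      (fun Φ => ‖f Φ * (quart Φ : ℂ) * (weight c 0 Φ : ℂ)‖) ?_ ?_ hq.norm ?_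
    · refine Filter.Eventually.of_forall fun g => Continuous.aestronglyMeasurable ?_
      have h1 := hf.1.mul (Complex.continuous_ofReal.comp (continuous_weight c g))
      have h2 := hf.1.mul (Complex.continuous_ofReal.comp (continuous_weight c 0))
      exact continuous_const.mul (h1.sub h2)
    · filter_upwards [self_mem_nhdsWithin] with g hg
      refine ae_of_all _ fun Φ => ?_
      have hg : 0 < g := hg
      have hV := quart_nonneg Φ
      have hw : weight c g Φ = weight c 0 Φ * Real.exp (-(g * quart Φ)) := by
        rw [weight, weight, ← Real.exp_add]; congr 1; ring
      have hle : 0 ≤ 1 - Real.exp (-(g * quart Φ)) := by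
        have := Real.exp_le_one_iff.2 (neg_nonpos.2 (mul_nonneg hg.le hV)); linarith
      have hle2 : 1 - Real.exp (-(g * quart Φ)) ≤ g * quart Φ := by
        have := Real.add_one_le_exp (-(g * quart Φ)); linarith
      have e : (g : ℂ)⁻¹ * (f Φ * (weight c g Φ : ℂ) - f Φ * (weight c 0 Φ : ℂ))
          = -(f Φ * ((g⁻¹ * (1 - Real.exp (-(g * quart Φ))) : ℝ) : ℂ) * (weight c 0 Φ : ℂ)) := by
        rw [hw]; push_cast; ring
      rw [e, norm_neg, norm_mul, norm_mul, norm_mul, norm_mul]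
      gcongr
      rw [Complex.norm_real, Complex.norm_real, Real.norm_of_nonneg (by positivity),
        Real.norm_of_nonneg hV, inv_mul_le_iff₀ hg]
      exact hle2
    · refine ae_of_all _ fun Φ => ?_
      have h1 : HasDerivAt (fun g : ℝ => weight c g Φ)
          (Real.exp (-quad c Φ - 0 * quart Φ) * -(1 * quart Φ)) 0 :=
        (((hasDerivAt_id (0 : ℝ)).mul_const (quart Φ)).const_sub (-quad c Φ)).exp
      have h2 := (h1.ofReal_comp.const_mul (f Φ)).hasDerivWithinAt (s := Set.Ioi 0)
      rw [hasDerivWithinAt_iff_tendsto_slope' (by simp)] at h2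
      convert! h2 using 2
      · simp [slope, weight]
      · simp [weight]; ring
  rw [integral_neg] at hlim
  refine hlim.congr' ?_
  filter_upwards [self_mem_nhdsWithin] with g hg
  have hg : 0 < g := hg
  rw [integral_const_mul, integral_sub (hf.integrable hc hg.le) (hf.integrable hc le_rfl)]
  simp [slope, mom]

/-! ### Gaussian moments -/

/-- Reversing the signs of the entries singled out by `σ`. -/
def flip (σ : Fin N → Fin N → Prop) [∀ n m, Decidable (σ n m)] (Φ : Fin N → Fin N → ℂ) :
    Fin N → Fin N → ℂ :=
  fun n m => if σ n m then -Φ n m else Φ n m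

lemma integral_flip (σ : Fin N → Fin N → Prop) [∀ n m, Decidable (σ n m)]
    (f : (Fin N → Fin N → ℂ) → ℂ) : ∫ Φ, f (flip σ Φ) = ∫ Φ, f Φ := by
  have hp : MeasurePreserving (flip σ) volume volume := by
    refine volume_preserving_pi (f := fun n (x : Fin N → ℂ) m => if σ n m then -x m else x m)
      fun n => ?_
    refine volume_preserving_pi (f := fun m (z : ℂ) => if σ n m then -z else z) fun m => ?_
    by_cases h : σ n m
    · simpa [h] using Measure.measurePreserving_neg (volume : Measure ℂ)
    · simp only [h, if_false]
      exact MeasurePreserving.id (volume : Measure ℂ)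
  have hi : Function.Involutive (flip σ) := fun Φ => by
    funext n m
    by_cases h : σ n m <;> simp [flip, h]
  exact MeasurePreserving.integral_comp'
    (f := MeasurableEquiv.ofInvolutive _ hi hp.measurable) hp f

/-- An observable that is odd under a sign change preserving the weight has expectation zero. -/
lemma mom_eq_zero_of_odd {c : Fin N → Fin N → ℝ} {g : ℝ} (σ : Fin N → Fin N → Prop)
    [∀ n m, Decidable (σ n m)] {f : (Fin N → Fin N → ℂ) → ℂ}
    (hw : ∀ Φ, weight c g (flip σ Φ) = weight c g Φ) (hf : ∀ Φ, f (flip σ Φ) = -f Φ) :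
    mom c g f = 0 := by
  have h := integral_flip σ (fun Φ => f Φ * (weight c g Φ : ℂ))
  simp only [hw, hf, neg_mul, integral_neg] at h
  exact self_eq_neg.1 h.symm

lemma norm_flip (σ : Fin N → Fin N → Prop) [∀ n m, Decidable (σ n m)] (Φ : Fin N → Fin N → ℂ)
    (n m : Fin N) : ‖flip σ Φ n m‖ = ‖Φ n m‖ := by
  unfold flip; split_ifs <;> simp

/-- The one-site moments of `|z|²` satisfy the recursion of an exponential random variable. -/
lemma one_site_moment_succ {c : ℝ} (hc : 0 < c) (k : ℕ) :
    ∫ z : ℂ, (‖z‖ ^ 2) ^ (k + 1) * Real.exp (-c * ‖z‖ ^ 2)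
      = c⁻¹ * (k + 1) * ∫ z : ℂ, (‖z‖ ^ 2) ^ k * Real.exp (-c * ‖z‖ ^ 2) := by
  have h : ∀ k : ℕ, ∫ z : ℂ, (‖z‖ ^ 2) ^ k * Real.exp (-c * ‖z‖ ^ 2)
      = Real.pi * (c ^ (k + 1))⁻¹ * (k.factorial : ℝ) := fun k => by
    have := Complex.integral_rpow_mul_exp_neg_mul_rpow (p := 2) (q := 2 * k) (b := c)
      (by norm_num) (by have : (0 : ℝ) ≤ k := k.cast_nonneg
                        linarith) hc
    have e1 : (2 * (k : ℝ) + 2) / 2 = k + 1 := by ring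
    have e2 : -(2 * (k : ℝ) + 2) / 2 = -((k + 1 : ℕ) : ℝ) := by push_cast; ring
    rw [e1, e2, Real.Gamma_nat_eq_factorial, Real.rpow_neg hc.le, Real.rpow_natCast] at this
    rw [show Real.pi = 2 * Real.pi / 2 by ring, ← this]
    refine integral_congr_ae (ae_of_all _ fun z => ?_)
    have e3 : ‖z‖ ^ (2 * (k : ℝ)) = (‖z‖ ^ 2) ^ k := by
      rw [← pow_mul, ← Real.rpow_natCast]; push_cast; rfl
    simp only [e3, Real.rpow_two]
  rw [h, h, Nat.factorial_succ]
  push_cast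
  field_simp
  ring

/-- The monomial `∏ |Φ_{nm}|^{2 k_{nm}}`. -/
noncomputable def mono (k : Fin N → Fin N → ℕ) (Φ : Fin N → Fin N → ℂ) : ℂ :=
  ∏ n, ∏ m, ((‖Φ n m‖ : ℂ) ^ 2) ^ k n m

/-- The exponent of the monomial `|Φ_{ab}|²`. -/
def unit (a b : Fin N) : Fin N → Fin N → ℕ := fun n m => if n = a ∧ m = b then 1 else 0

lemma mono_zero (Φ : Fin N → Fin N → ℂ) : mono 0 Φ = 1 := by simp [mono]

lemma mono_add (k l : Fin N → Fin N → ℕ) (Φ : Fin N → Fin N → ℂ) :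
    mono (k + l) Φ = mono k Φ * mono l Φ := by
  simp [mono, pow_add, Finset.prod_mul_distrib]

lemma mono_unit (a b : Fin N) (Φ : Fin N → Fin N → ℂ) : mono (unit a b) Φ = (‖Φ a b‖ : ℂ) ^ 2 := by
  unfold mono unit
  rw [Finset.prod_eq_single a, Finset.prod_eq_single b] <;> simp +contextual

lemma mom_mono (c : Fin N → Fin N → ℝ) (k : Fin N → Fin N → ℕ) :
    mom c 0 (mono k) = ((∏ n, ∏ m, ∫ z : ℂ, (‖z‖ ^ 2) ^ k n m * Real.exp (-c n m * ‖z‖ ^ 2) : ℝ)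
      : ℂ) := by
  have h : ∀ Φ : Fin N → Fin N → ℂ, mono k Φ * (weight c 0 Φ : ℂ)
      = ((∏ n, ∏ m, ((‖Φ n m‖ ^ 2) ^ k n m * Real.exp (-c n m * ‖Φ n m‖ ^ 2)) : ℝ) : ℂ) :=
    fun Φ => by
      rw [weight_zero_eq_prod]
      simp only [mono, Finset.prod_mul_distrib]
      push_cast
      rfl
  simp only [mom, h]
  rw [integral_complex_ofReal]
  congr 1
  rw [integral_fintype_prod_volume_eq_prod (fun n (x : Fin N → ℂ) =>
      ∏ m, ((‖x m‖ ^ 2) ^ k n m * Real.exp (-c n m * ‖x m‖ ^ 2)))]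
  refine Finset.prod_congr rfl fun n _ => ?_
  exact integral_fintype_prod_volume_eq_prod (fun m (z : ℂ) =>
      (‖z‖ ^ 2) ^ k n m * Real.exp (-c n m * ‖z‖ ^ 2))

/-- Adding a factor `|Φ_{ab}|²` multiplies a Gaussian moment by `(k_{ab} + 1) / c_{ab}`. -/
lemma mom_mono_succ {c : Fin N → Fin N → ℝ} (hc : ∀ n m, 0 < c n m) (a b : Fin N)
    (k : Fin N → Fin N → ℕ) :
    mom c 0 (mono (unit a b + k)) = (c a b : ℂ)⁻¹ * (k a b + 1) * mom c 0 (mono k) := by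
  have h : ∀ n m, ∫ z : ℂ, (‖z‖ ^ 2) ^ (unit a b + k) n m * Real.exp (-c n m * ‖z‖ ^ 2)
      = (if n = a then (if m = b then (c a b)⁻¹ * (k a b + 1) else 1) else 1)
        * ∫ z : ℂ, (‖z‖ ^ 2) ^ k n m * Real.exp (-c n m * ‖z‖ ^ 2) := fun n m => by
    by_cases hn : n = a
    · by_cases hm : m = b
      · subst hn; subst hm
        have : (unit n m + k) n m = k n m + 1 := by simp [unit, add_comm]
        rw [this, one_site_moment_succ (hc n m)]
        simp
      · simp [unit, hn, hm]
    · simp [unit, hn]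
  rw [mom_mono, mom_mono]
  simp only [h, Finset.prod_mul_distrib]
  have : ∏ n : Fin N, ∏ m : Fin N,
      (if n = a then (if m = b then (c a b)⁻¹ * ((k a b : ℝ) + 1) else 1) else 1)
      = (c a b)⁻¹ * (k a b + 1) := by
    rw [Finset.prod_eq_single a, Finset.prod_eq_single b] <;> simp +contextual
  rw [this]
  push_cast
  rfl

lemma mom_normSq {c : Fin N → Fin N → ℝ} (hc : ∀ n m, 0 < c n m) (p q : Fin N) :
    mom c 0 (fun Φ => (‖Φ p q‖ : ℂ) ^ 2) = (c p q : ℂ)⁻¹ * mom c 0 (fun _ => 1) := by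
  have h := mom_mono_succ hc p q 0
  have e0 : (mono 0 : (Fin N → Fin N → ℂ) → ℂ) = fun _ => 1 := funext mono_zero
  have e1 : mono (unit p q) = fun Φ => (‖Φ p q‖ : ℂ) ^ 2 := funext (mono_unit p q)
  simpa [e0, e1] using h

lemma mom_two {c : Fin N → Fin N → ℝ} (hc : ∀ n m, 0 < c n m) (a i b j : Fin N) :
    mom c 0 (fun Φ => (‖Φ a i‖ : ℂ) ^ 2 * (‖Φ b j‖ : ℂ) ^ 2)
      = (c a i : ℂ)⁻¹ * (c b j : ℂ)⁻¹ * ((if a = b ∧ i = j then 1 else 0) + 1)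
        * mom c 0 (fun _ => 1) := by
  have h := mom_mono_succ hc a i (unit b j)
  have e1 : ∀ k, mono (unit a i + k) = fun Φ => (‖Φ a i‖ : ℂ) ^ 2 * mono k Φ := fun k => by
    funext Φ; rw [mono_add, mono_unit]
  have e2 : mono (unit b j) = fun Φ => (‖Φ b j‖ : ℂ) ^ 2 := funext (mono_unit b j)
  rw [e1, e2, mom_normSq hc] at h
  rw [h]
  simp only [unit]
  push_cast
  ring

lemma mom_three {c : Fin N → Fin N → ℝ} (hc : ∀ n m, 0 < c n m) (p q a i b j : Fin N) :
    mom c 0 (fun Φ => (‖Φ p q‖ : ℂ) ^ 2 * ((‖Φ a i‖ : ℂ) ^ 2 * (‖Φ b j‖ : ℂ) ^ 2))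
      = (c p q : ℂ)⁻¹ * ((if p = a ∧ q = i then 1 else 0) + (if p = b ∧ q = j then 1 else 0) + 1)
        * mom c 0 (fun Φ => (‖Φ a i‖ : ℂ) ^ 2 * (‖Φ b j‖ : ℂ) ^ 2) := by
  have h := mom_mono_succ hc p q (unit a i + unit b j)
  have e1 : mono (unit p q + (unit a i + unit b j))
      = fun Φ => (‖Φ p q‖ : ℂ) ^ 2 * ((‖Φ a i‖ : ℂ) ^ 2 * (‖Φ b j‖ : ℂ) ^ 2) := by
    funext Φ; rw [mono_add, mono_add, mono_unit, mono_unit, mono_unit]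
  have e2 : mono (unit a i + unit b j)
      = fun Φ => (‖Φ a i‖ : ℂ) ^ 2 * (‖Φ b j‖ : ℂ) ^ 2 := by
    funext Φ; rw [mono_add, mono_unit, mono_unit]
  rw [e1, e2] at h
  rw [h]
  simp only [unit, Pi.add_apply]
  push_cast
  ring

lemma weight_zero_flip (c : Fin N → Fin N → ℝ) (σ : Fin N → Fin N → Prop)
    [∀ n m, Decidable (σ n m)] (Φ : Fin N → Fin N → ℂ) :
    weight c 0 (flip σ Φ) = weight c 0 Φ := by
  simp [weight, quad, norm_flip]

/-- The term of `Tr((Φ*Φ)²)` with column indices `i, j` and row indices `a, b`. -/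
noncomputable def vert (i j a b : Fin N) (Φ : Fin N → Fin N → ℂ) : ℂ :=
  ((starRingEnd ℂ) (Φ a i) * Φ a j) * ((starRingEnd ℂ) (Φ b j) * Φ b i)

lemma vert_tame (i j a b : Fin N) : Tame (vert i j a b) :=
  ((Tame.entry a i).conj.mul (Tame.entry a j)).mul ((Tame.entry b j).conj.mul (Tame.entry b i))

lemma vert_row (i j a : Fin N) (Φ : Fin N → Fin N → ℂ) :
    vert i j a a Φ = (‖Φ a i‖ : ℂ) ^ 2 * (‖Φ a j‖ : ℂ) ^ 2 := by
  rw [vert, ← Complex.conj_mul', ← Complex.conj_mul']; ring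

lemma vert_col (i a b : Fin N) (Φ : Fin N → Fin N → ℂ) :
    vert i i a b Φ = (‖Φ a i‖ : ℂ) ^ 2 * (‖Φ b i‖ : ℂ) ^ 2 := by
  rw [vert, ← Complex.conj_mul', ← Complex.conj_mul']

/-- If `a ≠ b` and `i ≠ j`, the entry `Φ_{ai}` occurs exactly once in the vertex, so the vertex is
odd in it. -/
lemma vert_flip {i j a b : Fin N} (hab : a ≠ b) (hij : i ≠ j) (Φ : Fin N → Fin N → ℂ) :
    vert i j a b (flip (fun n m => n = a ∧ m = i) Φ) = -vert i j a b Φ := by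
  simp [vert, flip, hab.symm, hij.symm]

/-- The connected correlator of `|Φ_{pq}|²` with one term of the quartic vertex, as the sum over
the Wick contractions joining them. -/
lemma mom_vert_connected {c : Fin N → Fin N → ℝ} (hc : ∀ n m, 0 < c n m) (p q i j a b : Fin N) :
    mom c 0 (fun Φ => (‖Φ p q‖ : ℂ) ^ 2 * vert i j a b Φ)
      - (c p q : ℂ)⁻¹ * mom c 0 (vert i j a b)
    = (c p q : ℂ)⁻¹ * mom c 0 (fun _ => 1) *
      ((if a = b then ((if p = a ∧ q = i then 1 else 0) + (if p = a ∧ q = j then 1 else 0))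
          * ((c a i : ℂ)⁻¹ * (c a j : ℂ)⁻¹) else 0)
      + (if i = j then ((if p = a ∧ q = i then 1 else 0) + (if p = b ∧ q = i then 1 else 0))
          * ((c a i : ℂ)⁻¹ * (c b i : ℂ)⁻¹) else 0)) := by
  by_cases hab : a = b
  · subst hab
    have e : vert i j a a = fun Φ => (‖Φ a i‖ : ℂ) ^ 2 * (‖Φ a j‖ : ℂ) ^ 2 :=
      funext (vert_row i j a)
    rw [e, mom_three hc, mom_two hc]
    by_cases hij : i = j
    · subst hij; simp; ring
    · simp [hij]; ring
  · by_cases hij : i = j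
    · subst hij
      have e : vert i i a b = fun Φ => (‖Φ a i‖ : ℂ) ^ 2 * (‖Φ b i‖ : ℂ) ^ 2 :=
        funext (vert_col i a b)
      rw [e, mom_three hc, mom_two hc]
      simp [hab]; ring
    · rw [mom_eq_zero_of_odd (fun n m => n = a ∧ m = i) (weight_zero_flip c _)
          (vert_flip hab hij),
        mom_eq_zero_of_odd (fun n m => n = a ∧ m = i) (weight_zero_flip c _)
          (fun Φ => by rw [vert_flip hab hij, norm_flip]; ring)]
      simp [hab, hij]

lemma mom_sum {c : Fin N → Fin N → ℝ} (hc : ∀ n m, 0 < c n m) {ι : Type*} (s : Finset ι)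
    {f : ι → (Fin N → Fin N → ℂ) → ℂ} (hf : ∀ i, Tame (f i)) :
    mom c 0 (fun Φ => ∑ i ∈ s, f i Φ) = ∑ i ∈ s, mom c 0 (f i) := by
  simp only [mom, Finset.sum_mul]
  exact integral_finsetSum _ fun i _ => (hf i).integrable hc le_rfl

/-- For tame `f`, the moment of `f · Tr((Φ*Φ)²)` splits over the terms of the vertex. -/
lemma mom_mul_quart {c : Fin N → Fin N → ℝ} (hc : ∀ n m, 0 < c n m)
    {f : (Fin N → Fin N → ℂ) → ℂ} (hf : Tame f) :
    mom c 0 (fun Φ => f Φ * (quart Φ : ℂ))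
      = ∑ i, ∑ j, ∑ a, ∑ b, mom c 0 (fun Φ => f Φ * vert i j a b Φ) := by
  have h : ∀ i j a b, Tame (fun Φ => f Φ * vert i j a b Φ) := fun i j a b =>
    hf.mul (vert_tame i j a b)
  have e : (fun Φ : Fin N → Fin N → ℂ => f Φ * (quart Φ : ℂ))
      = fun Φ => ∑ i, ∑ j, ∑ a, ∑ b, f Φ * vert i j a b Φ := by
    funext Φ
    rw [quart_eq_sum]
    simp only [Finset.mul_sum, vert]
  rw [e, mom_sum hc _ fun i => Tame.sum _ fun j => Tame.sum _ fun a => Tame.sum _ fun b => h i j a b]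
  refine Finset.sum_congr rfl fun i _ => ?_
  rw [mom_sum hc _ fun j => Tame.sum _ fun a => Tame.sum _ fun b => h i j a b]
  refine Finset.sum_congr rfl fun j _ => ?_
  rw [mom_sum hc _ fun a => Tame.sum _ fun b => h i j a b]
  exact Finset.sum_congr rfl fun a _ => mom_sum hc _ fun b => h i j a b

lemma normSq_tame (p q : Fin N) : Tame (fun Φ : Fin N → Fin N → ℂ => (‖Φ p q‖ : ℂ) ^ 2) := by
  simp only [← Complex.conj_mul']
  exact (Tame.entry p q).conj.mul (Tame.entry p q)

/-- The connected correlator of `|Φ_{pq}|²` with `Tr((Φ*Φ)²)`. -/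
lemma mom_quart_connected {c : Fin N → Fin N → ℝ} (hc : ∀ n m, 0 < c n m) (p q : Fin N) :
    mom c 0 (fun Φ => (‖Φ p q‖ : ℂ) ^ 2 * (quart Φ : ℂ))
      - (c p q : ℂ)⁻¹ * mom c 0 (fun Φ => 1 * (quart Φ : ℂ))
    = 2 * (c p q : ℂ)⁻¹ ^ 2 * mom c 0 (fun _ => 1) *
      ((∑ l, (c p l : ℂ)⁻¹) + ∑ k, (c k q : ℂ)⁻¹) := by
  rw [mom_mul_quart hc (normSq_tame p q), mom_mul_quart hc (Tame.const 1)]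
  simp only [one_mul, Finset.mul_sum, ← Finset.sum_sub_distrib]
  have h := mom_vert_connected hc p q
  simp only [show ∀ i j a b, mom c 0 (fun Φ => vert i j a b Φ) = mom c 0 (vert i j a b) from
    fun _ _ _ _ => rfl, h]
  simp only [← Finset.mul_sum, Finset.sum_add_distrib, ite_and, add_mul, ite_mul, one_mul,
    zero_mul, Finset.sum_ite_eq, Finset.mem_univ, if_true, Finset.sum_ite_irrel,
    Finset.sum_const_zero, ← Finset.sum_mul]
  ring

/-! ### The two-point function as a ratio of moments -/

/-- The coefficients `N (E_n + Ẽ_m)` of the Gaussian weight. -/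
def coef (E Et : Fin N → ℝ) (n m : Fin N) : ℝ := N * (E n + Et m)

lemma integrand_eq (E Et : Fin N → ℝ) (lam : ℝ) (p q : Fin N) (t s : ℂ) (Φ : Fin N → Fin N → ℂ) :
    lszIntegrand N E Et lam (0 + t • eMat N p q) (0 + s • eMat N q p) Φ
      = Complex.exp (t * (N * (starRingEnd ℂ) (Φ p q))) * Complex.exp (s * (N * Φ p q))
        * (weight (coef E Et) (N * lam / 2) Φ : ℂ) := by
  have hJ : ∑ m, ∑ n, (0 + t • eMat N p q) n m * (starRingEnd ℂ) (Φ n m)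
      = t * (starRingEnd ℂ) (Φ p q) := by
    simp [eMat, ite_and]
  have hK : ∑ m, ∑ n, (0 + s • eMat N q p) m n * Φ n m = s * Φ p q := by
    simp [eMat, ite_and, Finset.sum_ite_irrel]
  have hq : ∑ n, ∑ m, ((E n + Et m : ℝ) : ℂ) * ((Complex.normSq (Φ n m) : ℝ) : ℂ) * N
      = (quad (coef E Et) Φ : ℂ) := by
    unfold quad coef
    push_cast
    refine Finset.sum_congr rfl fun n _ => Finset.sum_congr rfl fun m _ => ?_
    rw [Complex.normSq_eq_norm_sq]
    push_cast
    ring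
  unfold lszIntegrand lszAction weight
  rw [hJ, hK, quart_eq_trace, Complex.ofReal_exp, ← Complex.exp_add, ← Complex.exp_add]
  congr 1
  push_cast
  rw [← hq]
  simp only [← Finset.sum_mul]
  push_cast
  ring

lemma lszZ_eq (E Et : Fin N → ℝ) (lam : ℝ) (p q : Fin N) (t s : ℂ) :
    lszZ N E Et lam (0 + t • eMat N p q) (0 + s • eMat N q p)
      = mom (coef E Et) (N * lam / 2) (fun Φ =>
        Complex.exp (t * (N * (starRingEnd ℂ) (Φ p q))) * Complex.exp (s * (N * Φ p q))) := by
  simp only [lszZ, mom, integrand_eq]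

lemma weight_neg (c : Fin N → Fin N → ℝ) (g : ℝ) (Φ : Fin N → Fin N → ℂ) :
    weight c g (flip (fun _ _ => True) Φ) = weight c g Φ := by
  simp [weight, quad, quart, flip]

/-- Since the one-point functions vanish by the symmetry `Φ ↦ -Φ`, the two-point function is the
normalised second moment. -/
lemma lszG2_eq (hN : 1 ≤ N) {E Et : Fin N → ℝ} (hE : ∀ n, 0 < E n) (hEt : ∀ n, 0 < Et n)
    (p q : Fin N) {lam : ℝ} (hlam : 0 ≤ lam) :
    lszG2 N E Et p q lam = N * (mom (coef E Et) (N * lam / 2) (fun Φ => (‖Φ p q‖ : ℂ) ^ 2)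
      / mom (coef E Et) (N * lam / 2) (fun _ => 1)) := by
  have hN0 : (0 : ℝ) < N := by exact_mod_cast hN
  have hNC : (N : ℂ) ≠ 0 := by exact_mod_cast hN0.ne'
  have hc : ∀ n m, 0 < coef E Et n m := fun n m => mul_pos hN0 (add_pos (hE n) (hEt m))
  have hg : 0 ≤ N * lam / 2 := by positivity
  set c := coef E Et
  set g := N * lam / 2
  set lJ : (Fin N → Fin N → ℂ) → ℂ := fun Φ => N * (starRingEnd ℂ) (Φ p q) with hlJ
  set lK : (Fin N → Fin N → ℂ) → ℂ := fun Φ => N * Φ p q with hlK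
  have tJ : Tame lJ := (Tame.const _).mul (Tame.entry p q).conj
  have tK : Tame lK := (Tame.const _).mul (Tame.entry p q)
  have bJ : ∀ Φ, ‖lJ Φ‖ ≤ N * size Φ := fun Φ => by
    simpa [hlJ] using mul_le_mul_of_nonneg_left (entry_le_size Φ p q) hN0.le
  have bK : ∀ Φ, ‖lK Φ‖ ≤ N * size Φ := fun Φ => by
    simpa [hlK] using mul_le_mul_of_nonneg_left (entry_le_size Φ p q) hN0.le
  have tE : ∀ t : ℂ, Tame (fun Φ => Complex.exp (t * lJ Φ)) := fun t => by
    have hJc := tJ.1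
    refine ⟨by fun_prop, 1, ‖t‖ * N, zero_le_one, by positivity, fun Φ => ?_⟩
    refine (Complex.norm_exp_le_exp_norm _).trans ?_
    rw [one_mul, norm_mul, mul_assoc]
    exact Real.exp_le_exp.2 (mul_le_mul_of_nonneg_left (bJ Φ) (norm_nonneg _))
  -- the partition function and its `K`-derivative along the `J`-direction
  let Z : ℂ → ℂ := fun t => mom c g (fun Φ => 1 * Complex.exp (t * lJ Φ))
  let A : ℂ → ℂ := fun t => mom c g (fun Φ => lK Φ * Complex.exp (t * lJ Φ))
  have hZ := hasDerivAt_source hc hg (Tame.const 1) tJ hN0.le bJ 0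
  have hA := hasDerivAt_source hc hg tK tJ hN0.le bJ 0
  have hA0 : A 0 = 0 := mom_eq_zero_of_odd (fun _ _ => True) (weight_neg c g) fun Φ => by
    simp [hlK, hlJ, flip]
  have hZ0 : Z 0 = mom c g (fun _ => 1) := by simp [Z]
  obtain ⟨r, hr, hr'⟩ := mom_one_pos hc hg
  have hZne : Z 0 ≠ 0 := by rw [hZ0, hr']; exact_mod_cast hr.ne'
  have hslit : ∀ᶠ t in nhds (0 : ℂ), Z t ∈ Complex.slitPlane := by
    refine hZ.continuousAt.eventually (Complex.isOpen_slitPlane.mem_nhds ?_)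
    change Z 0 ∈ _
    rw [hZ0, hr']
    exact Complex.ofReal_mem_slitPlane.2 hr
  have hinner : (fun t : ℂ => dK N q p (fun J K => Complex.log (lszZ N E Et lam J K))
      (0 + t • eMat N p q) 0) =ᶠ[nhds 0] fun t => A t / Z t := by
    filter_upwards [hslit] with t ht
    unfold dK
    simp only [lszZ_eq]
    have h := hasDerivAt_source hc hg (tE t) tK hN0.le bK 0
    have hz : mom c g (fun Φ => Complex.exp (t * lJ Φ) * Complex.exp (0 * lK Φ)) = Z t := by
      simp [Z]
    have h2 := h.clog (by rw [hz]; exact ht)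
    rw [hz] at h2
    rw [show A t = mom c g (fun Φ => Complex.exp (t * lJ Φ) * lK Φ * Complex.exp (0 * lK Φ)) by
      simp [A, mul_comm]]
    exact h2.deriv
  have hquot : HasDerivAt (fun t => A t / Z t) _ 0 := hA.div hZ hZne
  unfold lszG2
  have : dJ N p q (dK N q p (fun J K => Complex.log (lszZ N E Et lam J K))) 0 0
      = N ^ 2 * (mom c g (fun Φ => (‖Φ p q‖ : ℂ) ^ 2) / mom c g (fun _ => 1)) := by
    unfold dJ
    rw [hinner.deriv_eq, hquot.deriv]
    change (_ * Z 0 - A 0 * _) / Z 0 ^ 2 = _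
    have hA' : mom c g (fun Φ => lK Φ * lJ Φ * Complex.exp (0 * lJ Φ))
        = N ^ 2 * mom c g (fun Φ => (‖Φ p q‖ : ℂ) ^ 2) := by
      simp only [mom, ← integral_const_mul]
      refine integral_congr_ae (ae_of_all _ fun Φ => ?_)
      simp only [hlK, hlJ, ← Complex.conj_mul', zero_mul, Complex.exp_zero]
      ring
    rw [hA', hA0, ← hZ0]
    field_simp
    ring
  rw [this]
  field_simp

end LSZ

/-- First-order perturbative expansion of the LSZ 2-point function:
`G_{|pq|}(0) = 1/(E_p+Ẽ_q)` and
`lim_{λ→0⁺} (G_{|pq|}(λ) − 1/(E_p+Ẽ_q))/λ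
  = −(1/(E_p+Ẽ_q)²)·(1/N)·(Σ_l 1/(E_p+Ẽ_l) + Σ_k 1/(E_k+Ẽ_q))`. -/
theorem lsz_two_point_perturbative
    (N : ℕ) (hN : 1 ≤ N) (E Et : Fin N → ℝ)
    (hE : ∀ n, 0 < E n) (hEt : ∀ n, 0 < Et n) (p q : Fin N) :
    (lszG2 N E Et p q 0 = 1 / (((E p + Et q : ℝ)) : ℂ)) ∧
    Filter.Tendsto
      (fun lam : ℝ => (lszG2 N E Et p q lam - 1 / (((E p + Et q : ℝ)) : ℂ)) / (lam : ℂ))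
      (nhdsWithin 0 (Set.Ioi 0))
      (nhds (-(1 / (((E p + Et q : ℝ)) : ℂ) ^ 2) * ((1 : ℂ) / (N : ℂ)) *
        ((∑ l, 1 / (((E p + Et l : ℝ)) : ℂ)) + ∑ k, 1 / (((E k + Et q : ℝ)) : ℂ)))) := by
  have hN0 : (0 : ℝ) < N := by exact_mod_cast hN
  have hNC : (N : ℂ) ≠ 0 := by exact_mod_cast hN0.ne'
  have hc : ∀ n m, 0 < LSZ.coef E Et n m := fun n m => mul_pos hN0 (add_pos (hE n) (hEt m))
  obtain ⟨r, hr, hr'⟩ := LSZ.mom_one_pos hc le_rfl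
  have hM : LSZ.mom (LSZ.coef E Et) 0 (fun _ => 1) ≠ 0 := by
    rw [hr']; exact_mod_cast hr.ne'
  have hpq : ((E p + Et q : ℝ) : ℂ) ≠ 0 := by exact_mod_cast (add_pos (hE p) (hEt q)).ne'
  have hcoef : ∀ n m, (LSZ.coef E Et n m : ℂ)⁻¹ = (N : ℂ)⁻¹ * (1 / ((E n + Et m : ℝ) : ℂ)) :=
    fun n m => by simp [LSZ.coef, mul_comm]
  have h0 : lszG2 N E Et p q 0 = 1 / (((E p + Et q : ℝ)) : ℂ) := by
    rw [LSZ.lszG2_eq hN hE hEt p q le_rfl, mul_zero, zero_div, LSZ.mom_normSq hc,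
      mul_div_cancel_right₀ _ hM, hcoef]
    field_simp
  refine ⟨h0, ?_⟩
  -- the coupling of the quartic term in the exponent is `g = N λ / 2`
  have hscale : HasDerivWithinAt (fun lam : ℝ => N * lam / 2) (N / 2) (Set.Ioi 0) 0 := by
    simpa using (((hasDerivAt_id (0 : ℝ)).const_mul (N : ℝ)).div_const 2).hasDerivWithinAt
  have hmaps : Set.MapsTo (fun lam : ℝ => N * lam / 2) (Set.Ioi 0) (Set.Ioi 0) := fun x hx => by
    have hx : 0 < x := hx
    change 0 < N * x / 2
    positivity
  have hcoupling : ∀ {f : (Fin N → Fin N → ℂ) → ℂ}, LSZ.Tame f →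
      HasDerivWithinAt (fun lam : ℝ => LSZ.mom (LSZ.coef E Et) (N * lam / 2) f)
        (((N / 2 : ℝ) : ℂ) * -LSZ.mom (LSZ.coef E Et) 0 (fun Φ => f Φ * (LSZ.quart Φ : ℂ)))
        (Set.Ioi 0) 0 := fun {f} hf => by
    have h := LSZ.hasDerivWithinAt_coupling hc hf
    have h' := HasDerivWithinAt.scomp_of_eq (0 : ℝ) h hscale hmaps (by simp)
    rw [Complex.real_smul] at h'
    exact h'
  have hquot := ((hcoupling (LSZ.normSq_tame p q)).div (hcoupling (LSZ.Tame.const 1))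
    (by simpa using hM)).const_mul (N : ℂ)
  rw [hasDerivWithinAt_iff_tendsto_slope' (by simp)] at hquot
  have hconn := LSZ.mom_quart_connected hc p q
  rw [sub_eq_iff_eq_add] at hconn
  simp only [mul_zero, zero_div] at hquot
  rw [LSZ.mom_normSq hc, hconn] at hquot
  convert! hquot.congr' ?_ using 2
  · simp only [hcoef, ← Finset.mul_sum]
    push_cast at hpq ⊢
    field_simp
    ring
  · filter_upwards [self_mem_nhdsWithin] with lam hlam
    have hlam : 0 < lam := hlam
    rw [← h0, LSZ.lszG2_eq hN hE hEt p q hlam.le, LSZ.lszG2_eq hN hE hEt p q le_rfl]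
    simp [slope, div_eq_inv_mul]
end

section
/- Let p_1 ≠ p_2 and q_1 ≠ q_2 be indices in {1,…,N}, and for λ ≥ 0 define the 4-point function G_{|p_1q_1p_2q_2|}(λ) := (1/N)·∂⁴(log Z)/∂J_{p_1q_1}∂K_{q_1p_2}∂J_{p_2q_2}∂K_{q_2p_1} evaluated at (J,K) = (0,0). Then G_{|p_1q_1p_2q_2|}(0) = 0, and lim_{λ→0⁺} G_{|p_1q_1p_2q_2|}(λ)/λ = −1/[ (E_{p_1}+Ẽ_{q_1})(E_{p_2}+Ẽ_{q_1})(E_{p_2}+Ẽ_{q_2})(E_{p_1}+Ẽ_{q_2}) ]. -/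
/-!
Write `⟨P⟩` for the integral of an observable `P(Φ)` against the weight `exp(-N S(Φ) + sources)`.
Since the quadratic part of the action is coercive and the quartic part is nonnegative, observables
of exponential growth are integrable (`ExpBdd.integrable`), and differentiating `⟨P⟩` in a source
inserts `N` times the conjugate field (`hasDerivAt_moment_J`, `hasDerivAt_moment_K`).

The action is invariant under sign flips of a row or a column of `Φ`. Because `p₁ ≠ p₂` and
`q₁ ≠ q₂`, this kills every disconnected contribution to the fourth derivative of `log Z`, so that
for every `λ ≥ 0` (`lszG4_eq`)
`G(λ) = N³ ⟨Φ_{p₁q₂} conj Φ_{p₂q₂} Φ_{p₂q₁} conj Φ_{p₁q₁}⟩ / ⟨1⟩` at zero sources.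

At `λ = 0` the action is invariant under independent phases of all entries, hence the numerator
vanishes. By dominated convergence its derivative at `λ = 0⁺` is `-N/2` times the Gaussian integral
of the four fields and `Tr((Φ*Φ)²)` (`tendsto_moment_div`). Expanding the trace, entrywise phases
kill all index quadruples but two, and each of these gives the integral of
`|Φ_{p₁q₁}|² |Φ_{p₂q₁}|² |Φ_{p₂q₂}|² |Φ_{p₁q₂}|²`, which factorises over the entries into
variances `1/(N(E_n + Ẽ_m))` (`moment_fourField_mul_quartPart`). The powers of `N` cancel.
-/

open MeasureTheory Matrix

/-- The 4-point function
`G_{|p₁q₁p₂q₂|}(λ) = (1/N)·∂⁴(log Z)/∂J_{p₁q₁}∂K_{q₁p₂}∂J_{p₂q₂}∂K_{q₂p₁}|_{J=K=0}`. -/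
noncomputable def lszG4 (N : ℕ) (E Et : Fin N → ℝ) (p₁ q₁ p₂ q₂ : Fin N) (lam : ℝ) : ℂ :=
  (1 / (N : ℂ)) *
    dJ N p₁ q₁ (dK N q₁ p₂ (dJ N p₂ q₂ (dK N q₂ p₁
      (fun J K => Complex.log (lszZ N E Et lam J K))))) 0 0

/-! ### Exponentially bounded observables and their integrability -/

/-- The entrywise `ℓ¹` norm of a matrix. -/
noncomputable def entryL1 {N : ℕ} (Φ : Fin N → Fin N → ℂ) : ℝ := ∑ n, ∑ m, ‖Φ n m‖

/-- The class of observables: continuous functions of `Φ` of at most exponential growth in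
`entryL1 Φ`. It contains polynomials in the entries and their conjugates as well as exponentials of
source terms, and is integrable against the Gaussian weight. -/
def ExpBdd {N : ℕ} (P : (Fin N → Fin N → ℂ) → ℂ) : Prop :=
  Continuous P ∧ ∃ C R : ℝ, 0 ≤ C ∧ 0 ≤ R ∧ ∀ Φ, ‖P Φ‖ ≤ C * Real.exp (R * entryL1 Φ)

lemma entryL1_nonneg {N : ℕ} (Φ : Fin N → Fin N → ℂ) : 0 ≤ entryL1 Φ :=
  Finset.sum_nonneg fun _ _ => Finset.sum_nonneg fun _ _ => norm_nonneg _

lemma norm_entry_le {N : ℕ} (Φ : Fin N → Fin N → ℂ) (a b : Fin N) : ‖Φ a b‖ ≤ entryL1 Φ :=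
  (Finset.single_le_sum (f := fun m => ‖Φ a m‖) (fun _ _ => norm_nonneg _)
    (Finset.mem_univ b)).trans
  (Finset.single_le_sum (f := fun n => ∑ m, ‖Φ n m‖)
    (fun _ _ => Finset.sum_nonneg fun _ _ => norm_nonneg _) (Finset.mem_univ a))

lemma continuous_entry {N : ℕ} (a b : Fin N) :
    Continuous (fun Φ : Fin N → Fin N → ℂ => Φ a b) := by fun_prop

lemma continuous_entryL1 {N : ℕ} : Continuous (entryL1 (N := N)) := by
  unfold entryL1; fun_prop

lemma ExpBdd.const {N : ℕ} (c : ℂ) : ExpBdd (fun _ : Fin N → Fin N → ℂ => c) :=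
  ⟨continuous_const, ‖c‖, 0, norm_nonneg _, le_rfl, fun Φ => by simp⟩

lemma ExpBdd.mul {N : ℕ} {P Q : (Fin N → Fin N → ℂ) → ℂ} (hP : ExpBdd P) (hQ : ExpBdd Q) :
    ExpBdd (fun Φ => P Φ * Q Φ) := by
  obtain ⟨hPc, C, R, hC, hR, hP⟩ := hP
  obtain ⟨hQc, C', R', hC', hR', hQ⟩ := hQ
  refine ⟨hPc.mul hQc, C * C', R + R', by positivity, by positivity, fun Φ => ?_⟩
  calc ‖P Φ * Q Φ‖ = ‖P Φ‖ * ‖Q Φ‖ := norm_mul _ _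
    _ ≤ (C * Real.exp (R * entryL1 Φ)) * (C' * Real.exp (R' * entryL1 Φ)) :=
        mul_le_mul (hP Φ) (hQ Φ) (norm_nonneg _) (by positivity)
    _ = _ := by rw [add_mul, Real.exp_add]; ring

lemma ExpBdd.add {N : ℕ} {P Q : (Fin N → Fin N → ℂ) → ℂ} (hP : ExpBdd P) (hQ : ExpBdd Q) :
    ExpBdd (fun Φ => P Φ + Q Φ) := by
  obtain ⟨hPc, C, R, hC, hR, hP⟩ := hP
  obtain ⟨hQc, C', R', hC', hR', hQ⟩ := hQ
  refine ⟨hPc.add hQc, C + C', R + R', by positivity, by positivity, fun Φ => ?_⟩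
  have h0 := entryL1_nonneg Φ
  calc ‖P Φ + Q Φ‖ ≤ ‖P Φ‖ + ‖Q Φ‖ := norm_add_le _ _
    _ ≤ C * Real.exp (R * entryL1 Φ) + C' * Real.exp (R' * entryL1 Φ) := add_le_add (hP Φ) (hQ Φ)
    _ ≤ C * Real.exp ((R + R') * entryL1 Φ) + C' * Real.exp ((R + R') * entryL1 Φ) := by
        gcongr <;> linarith
    _ = _ := by ring

lemma ExpBdd.sum {N : ℕ} {ι : Type*} (s : Finset ι) {P : ι → (Fin N → Fin N → ℂ) → ℂ}
    (hP : ∀ i, ExpBdd (P i)) : ExpBdd (fun Φ => ∑ i ∈ s, P i Φ) := by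
  classical
  induction s using Finset.induction_on with
  | empty => simpa using ExpBdd.const (N := N) 0
  | insert a s ha ih => simpa [Finset.sum_insert ha] using (hP a).add ih

/-- A continuous function of at most linear growth is exponentially bounded. -/
lemma ExpBdd.of_linear {N : ℕ} {L : (Fin N → Fin N → ℂ) → ℂ} (hc : Continuous L) (R : ℝ)
    (hR : 0 ≤ R) (hL : ∀ Φ, ‖L Φ‖ ≤ R * entryL1 Φ) : ExpBdd L :=
  ⟨hc, 1, R, zero_le_one, hR, fun Φ => by
    linarith [hL Φ, Real.add_one_le_exp (R * entryL1 Φ)]⟩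

/-- The exponential of a continuous function of at most linear growth is exponentially bounded. -/
lemma ExpBdd.exp_of_linear {N : ℕ} {L : (Fin N → Fin N → ℂ) → ℂ} (hc : Continuous L) (R : ℝ)
    (hR : 0 ≤ R) (hL : ∀ Φ, ‖L Φ‖ ≤ R * entryL1 Φ) : ExpBdd (fun Φ => Complex.exp (L Φ)) :=
  ⟨Complex.continuous_exp.comp hc, 1, R, zero_le_one, hR, fun Φ => by
    rw [one_mul, Complex.norm_exp]
    exact Real.exp_le_exp.2 ((Complex.re_le_norm _).trans (hL Φ))⟩

lemma ExpBdd.entry {N : ℕ} (a b : Fin N) : ExpBdd (fun Φ : Fin N → Fin N → ℂ => Φ a b) :=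
  ExpBdd.of_linear (continuous_entry a b) 1 zero_le_one fun Φ => by
    simpa using norm_entry_le Φ a b

lemma ExpBdd.conj_entry {N : ℕ} (a b : Fin N) :
    ExpBdd (fun Φ : Fin N → Fin N → ℂ => (starRingEnd ℂ) (Φ a b)) :=
  ExpBdd.of_linear (Complex.continuous_conj.comp (continuous_entry a b)) 1 zero_le_one fun Φ => by
    simpa using norm_entry_le Φ a b

/-- On `ℂ`, a Gaussian dominates any exponential of the modulus: completing the square gives
`R r - δ r² ≤ R²/(2δ) - (δ/2) r²`. -/
lemma integrable_exp_linear_sub_sq (R δ : ℝ) (hδ : 0 < δ) :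
    Integrable (fun z : ℂ => Real.exp (R * ‖z‖ - δ * ‖z‖ ^ 2)) := by
  have h := (GaussianFourier.integrable_cexp_neg_mul_sq_norm_add (V := ℂ)
    (b := ((δ / 2 : ℝ) : ℂ)) (by simpa using hδ) 0 0).norm
  refine (h.const_mul (Real.exp (R ^ 2 / (2 * δ)))).mono'
    (by fun_prop) (Filter.Eventually.of_forall fun z => ?_)
  rw [Real.norm_of_nonneg (Real.exp_pos _).le, Complex.norm_exp, ← Real.exp_add, Real.exp_le_exp]
  have hre : (-((δ / 2 : ℝ) : ℂ) * (‖z‖ : ℂ) ^ 2 + 0 * ((inner ℝ (0 : ℂ) z : ℝ) : ℂ)).re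
      = -(δ / 2) * ‖z‖ ^ 2 := by
    rw [zero_mul, add_zero, ← Complex.ofReal_pow, ← Complex.ofReal_neg, ← Complex.ofReal_mul,
      Complex.ofReal_re]
  rw [hre]
  have key : R ^ 2 / (2 * δ) - (δ / 2) * ‖z‖ ^ 2 - (R * ‖z‖ - δ * ‖z‖ ^ 2)
      = (R - δ * ‖z‖) ^ 2 / (2 * δ) := by field_simp; ring
  have : 0 ≤ (R - δ * ‖z‖) ^ 2 / (2 * δ) := by positivity
  linarith

lemma integrable_exp_entryL1 (N : ℕ) (R δ : ℝ) (hδ : 0 < δ) :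
    Integrable (fun Φ : Fin N → Fin N → ℂ =>
      Real.exp (R * entryL1 Φ - δ * ∑ n, ∑ m, ‖Φ n m‖ ^ 2)) := by
  have h : Integrable (fun Φ : Fin N → Fin N → ℂ =>
      ∏ n, ∏ m, Real.exp (R * ‖Φ n m‖ - δ * ‖Φ n m‖ ^ 2)) :=
    Integrable.fintype_prod (f := fun (_ : Fin N) (v : Fin N → ℂ) =>
      ∏ m, Real.exp (R * ‖v m‖ - δ * ‖v m‖ ^ 2)) fun _ =>
      Integrable.fintype_prod (f := fun (_ : Fin N) (z : ℂ) =>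
        Real.exp (R * ‖z‖ - δ * ‖z‖ ^ 2)) fun _ => integrable_exp_linear_sub_sq R δ hδ
  convert h using 2 with Φ
  simp_rw [← Real.exp_sum, entryL1, Finset.sum_sub_distrib, Finset.mul_sum]

/-! ### The action -/

/-- The quadratic part of the action, as a real number. -/
noncomputable def quadPart (N : ℕ) (E Et : Fin N → ℝ) (Φ : Fin N → Fin N → ℂ) : ℝ :=
  ∑ n, ∑ m, (E n + Et m) * ‖Φ n m‖ ^ 2

/-- `Tr((Φ*Φ)²)` as a real number: the squared Hilbert–Schmidt norm of `Φ*Φ`. -/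
noncomputable def quartPart (N : ℕ) (Φ : Fin N → Fin N → ℂ) : ℝ :=
  ∑ a, ∑ c, Complex.normSq (∑ b, (starRingEnd ℂ) (Φ b a) * Φ b c)

lemma quartPart_nonneg (N : ℕ) (Φ : Fin N → Fin N → ℂ) : 0 ≤ quartPart N Φ :=
  Finset.sum_nonneg fun _ _ => Finset.sum_nonneg fun _ _ => Complex.normSq_nonneg _

lemma continuous_quadPart (N : ℕ) (E Et : Fin N → ℝ) : Continuous (quadPart N E Et) := by
  unfold quadPart; fun_prop

lemma continuous_quartPart (N : ℕ) : Continuous (quartPart N) := by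
  unfold quartPart
  refine continuous_finsetSum _ fun a _ => continuous_finsetSum _ fun c _ =>
    Complex.continuous_normSq.comp (continuous_finsetSum _ fun b _ =>
      (Complex.continuous_conj.comp (continuous_entry b a)).mul (continuous_entry b c))

/-- The quartic interaction as a sum over its index quadruples. -/
lemma quartPart_eq_sum (N : ℕ) (Φ : Fin N → Fin N → ℂ) :
    (quartPart N Φ : ℂ) = ∑ a, ∑ c, ∑ b, ∑ d,
      ((starRingEnd ℂ) (Φ b a) * Φ b c) * ((starRingEnd ℂ) (Φ d c) * Φ d a) := by
  unfold quartPart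
  push_cast
  refine Finset.sum_congr rfl fun a _ => Finset.sum_congr rfl fun c _ => ?_
  rw [← Complex.mul_conj, map_sum, Finset.sum_mul_sum]
  refine Finset.sum_congr rfl fun b _ => Finset.sum_congr rfl fun d _ => ?_
  simp only [map_mul, Complex.conj_conj]
  ring

lemma expBdd_quartPart (N : ℕ) : ExpBdd (fun Φ => (quartPart N Φ : ℂ)) := by
  simp_rw [quartPart_eq_sum]
  exact ExpBdd.sum _ fun a => ExpBdd.sum _ fun c => ExpBdd.sum _ fun b => ExpBdd.sum _ fun d =>
    ((ExpBdd.conj_entry b a).mul (ExpBdd.entry b c)).mul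
      ((ExpBdd.conj_entry d c).mul (ExpBdd.entry d a))

lemma lszAction_eq (N : ℕ) (E Et : Fin N → ℝ) (lam : ℝ) (Φ : Fin N → Fin N → ℂ) :
    lszAction N E Et lam Φ = ((quadPart N E Et Φ + lam / 2 * quartPart N Φ : ℝ) : ℂ) := by
  have h : ((((Matrix.of Φ)ᴴ * Matrix.of Φ) * ((Matrix.of Φ)ᴴ * Matrix.of Φ)).trace)
      = (quartPart N Φ : ℂ) := by
    rw [quartPart_eq_sum]
    simp only [Matrix.trace, Matrix.diag, Matrix.mul_apply, Matrix.conjTranspose_apply,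
      Matrix.of_apply, Finset.sum_mul_sum]
    rfl
  unfold lszAction
  rw [h]
  unfold quadPart
  push_cast
  simp only [Complex.normSq_eq_norm_sq]
  push_cast
  rfl

/-- The source term is a continuous function of `Φ` of at most linear growth. -/
lemma source_bound (N : ℕ) (J K : Fin N → Fin N → ℂ) :
    Continuous (fun Φ : Fin N → Fin N → ℂ =>
      (N : ℂ) * ((∑ m, ∑ n, J n m * (starRingEnd ℂ) (Φ n m)) + ∑ m, ∑ n, K m n * Φ n m)) ∧
    ∃ R : ℝ, 0 ≤ R ∧ ∀ Φ : Fin N → Fin N → ℂ,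
      ‖(N : ℂ) * ((∑ m, ∑ n, J n m * (starRingEnd ℂ) (Φ n m)) + ∑ m, ∑ n, K m n * Φ n m)‖
        ≤ R * entryL1 Φ := by
  refine ⟨?_, (N : ℝ) * ((∑ m, ∑ n, ‖J n m‖) + ∑ m, ∑ n, ‖K m n‖), by positivity, fun Φ => ?_⟩
  · refine continuous_const.mul ((continuous_finsetSum _ fun m _ => continuous_finsetSum _ fun n _ =>
      continuous_const.mul (Complex.continuous_conj.comp (continuous_entry n m))).add ?_)
    exact continuous_finsetSum _ fun m _ => continuous_finsetSum _ fun n _ =>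
      continuous_const.mul (continuous_entry n m)
  · rw [norm_mul, Complex.norm_natCast, mul_assoc, add_mul]
    simp only [Finset.sum_mul]
    refine mul_le_mul_of_nonneg_left ((norm_add_le _ _).trans (add_le_add ?_ ?_)) (by positivity)
    all_goals
      refine norm_sum_le_of_le _ fun m _ => norm_sum_le_of_le _ fun n _ => ?_
      rw [norm_mul]
      refine mul_le_mul_of_nonneg_left ?_ (norm_nonneg _)
      simpa using norm_entry_le Φ n m

lemma lszIntegrand_eq (N : ℕ) (E Et : Fin N → ℝ) (lam : ℝ) (J K Φ : Fin N → Fin N → ℂ) :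
    lszIntegrand N E Et lam J K Φ =
      Complex.exp ((N : ℂ) * ((∑ m, ∑ n, J n m * (starRingEnd ℂ) (Φ n m))
        + ∑ m, ∑ n, K m n * Φ n m)) *
      ((Real.exp (-(N : ℝ) * (quadPart N E Et Φ + lam / 2 * quartPart N Φ)) : ℝ) : ℂ) := by
  unfold lszIntegrand
  rw [lszAction_eq, Complex.exp_add, mul_comm]
  push_cast
  rfl

lemma lszIntegrand_zero (N : ℕ) (E Et : Fin N → ℝ) (lam : ℝ) (Φ : Fin N → Fin N → ℂ) :
    lszIntegrand N E Et lam 0 0 Φ =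
      ((Real.exp (-(N : ℝ) * (quadPart N E Et Φ + lam / 2 * quartPart N Φ)) : ℝ) : ℂ) := by
  rw [lszIntegrand_eq]; simp

lemma continuous_lszIntegrand (N : ℕ) (E Et : Fin N → ℝ) (lam : ℝ) (J K : Fin N → Fin N → ℂ) :
    Continuous (lszIntegrand N E Et lam J K) := by
  have h : lszIntegrand N E Et lam J K = _ := funext (lszIntegrand_eq N E Et lam J K)
  rw [h]
  refine (Complex.continuous_exp.comp (source_bound N J K).1).mul
    (Complex.continuous_ofReal.comp (Real.continuous_exp.comp (continuous_const.mul ?_)))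
  exact (continuous_quadPart N E Et).add (continuous_const.mul (continuous_quartPart N))

/-- Coercivity of the quadratic part: the finitely many numbers `E_n + Ẽ_m` have a positive lower
bound. -/
lemma exists_quadPart_ge (N : ℕ) (hN : 1 ≤ N) (E Et : Fin N → ℝ)
    (hE : ∀ n, 0 < E n) (hEt : ∀ n, 0 < Et n) :
    ∃ δ : ℝ, 0 < δ ∧ ∀ Φ, δ * ∑ n, ∑ m, ‖Φ n m‖ ^ 2 ≤ quadPart N E Et Φ := by
  have : Nonempty (Fin N) := ⟨⟨0, hN⟩⟩
  obtain ⟨⟨n₀, m₀⟩, h⟩ := Finite.exists_min (fun x : Fin N × Fin N => E x.1 + Et x.2)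
  refine ⟨E n₀ + Et m₀, add_pos (hE _) (hEt _), fun Φ => ?_⟩
  unfold quadPart
  simp only [Finset.mul_sum]
  exact Finset.sum_le_sum fun n _ => Finset.sum_le_sum fun m _ =>
    mul_le_mul_of_nonneg_right (h (n, m)) (by positivity)

/-- Observables are integrable against the weight of the model, for every `λ ≥ 0` and all
sources. -/
lemma ExpBdd.integrable {N : ℕ} (hN : 1 ≤ N) {E Et : Fin N → ℝ}
    (hE : ∀ n, 0 < E n) (hEt : ∀ n, 0 < Et n) {lam : ℝ} (hl : 0 ≤ lam)
    (J K : Fin N → Fin N → ℂ) {P : (Fin N → Fin N → ℂ) → ℂ} (hP : ExpBdd P) :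
    Integrable (fun Φ => P Φ * lszIntegrand N E Et lam J K Φ) := by
  obtain ⟨δ, hδ, hQ⟩ := exists_quadPart_ge N hN E Et hE hEt
  obtain ⟨hs, R, hR, hsb⟩ := source_bound N J K
  have hN' : (0 : ℝ) < N := by exact_mod_cast hN
  obtain ⟨hc, C, R', hC, hR', hb⟩ := hP.mul (ExpBdd.exp_of_linear hs R hR hsb)
  refine ((integrable_exp_entryL1 N R' (N * δ) (by positivity)).const_mul C).mono'
    (hP.1.mul (continuous_lszIntegrand N E Et lam J K)).aestronglyMeasurable
    (Filter.Eventually.of_forall fun Φ => ?_)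
  rw [lszIntegrand_eq, ← mul_assoc, norm_mul, Complex.norm_real,
    Real.norm_of_nonneg (Real.exp_pos _).le]
  calc _ ≤ (C * Real.exp (R' * entryL1 Φ)) *
        Real.exp (-(N * δ * ∑ n, ∑ m, ‖Φ n m‖ ^ 2)) := by
        refine mul_le_mul (hb Φ) (Real.exp_le_exp.2 ?_) (Real.exp_pos _).le (by positivity)
        have h1 := mul_le_mul_of_nonneg_left (hQ Φ) hN'.le
        have h2 : 0 ≤ (N : ℝ) * (lam / 2 * quartPart N Φ) := by
          have := quartPart_nonneg N Φ; positivity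
        nlinarith
    _ = _ := by rw [mul_assoc, ← Real.exp_add, sub_eq_add_neg]

/-! ### Moments and differentiation in the sources -/

/-- The unnormalised expectation of the observable `P` in the presence of sources. -/
noncomputable def lszMoment (N : ℕ) (E Et : Fin N → ℝ) (lam : ℝ)
    (P : (Fin N → Fin N → ℂ) → ℂ) (J K : Fin N → Fin N → ℂ) : ℂ :=
  ∫ Φ : Fin N → Fin N → ℂ, P Φ * lszIntegrand N E Et lam J K Φ

lemma lszZ_eq_moment (N : ℕ) (E Et : Fin N → ℝ) (lam : ℝ) (J K : Fin N → Fin N → ℂ) :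
    lszZ N E Et lam J K = lszMoment N E Et lam (fun _ => 1) J K := by
  simp [lszZ, lszMoment]

/-- Differentiation under the integral sign along a source coupled to `L`. -/
lemma hasDerivAt_integral_exp {N : ℕ} (hN : 1 ≤ N) {E Et : Fin N → ℝ}
    (hE : ∀ n, 0 < E n) (hEt : ∀ n, 0 < Et n) {lam : ℝ} (hl : 0 ≤ lam)
    (J K : Fin N → Fin N → ℂ) {P : (Fin N → Fin N → ℂ) → ℂ} (hP : ExpBdd P)
    {L : (Fin N → Fin N → ℂ) → ℂ} (hLc : Continuous L) (R : ℝ) (hR : 0 ≤ R)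
    (hL : ∀ Φ, ‖L Φ‖ ≤ R * entryL1 Φ) :
    HasDerivAt (fun t : ℂ => ∫ Φ, P Φ * (Complex.exp (t * L Φ) * lszIntegrand N E Et lam J K Φ))
      (lszMoment N E Et lam (fun Φ => P Φ * L Φ) J K) 0 := by
  have hW := continuous_lszIntegrand N E Et lam J K
  have hRexp : ExpBdd (fun Φ : Fin N → Fin N → ℂ => Complex.exp ((R * entryL1 Φ : ℝ) : ℂ)) := by
    refine ExpBdd.exp_of_linear
      (Complex.continuous_ofReal.comp (continuous_const.mul continuous_entryL1)) R hR fun Φ => ?_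
    rw [Complex.norm_real, Real.norm_of_nonneg (mul_nonneg hR (entryL1_nonneg Φ))]
  have hbound := (((hP.mul (ExpBdd.of_linear hLc R hR hL)).mul hRexp).integrable
    hN hE hEt hl J K).norm
  have hmain := hasDerivAt_integral_of_dominated_loc_of_deriv_le (μ := volume) (x₀ := (0 : ℂ))
    (F := fun (t : ℂ) Φ => P Φ * (Complex.exp (t * L Φ) * lszIntegrand N E Et lam J K Φ))
    (F' := fun (t : ℂ) Φ =>
      P Φ * ((Complex.exp (t * L Φ) * L Φ) * lszIntegrand N E Et lam J K Φ))
    (Metric.ball_mem_nhds (0 : ℂ) one_pos)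
    (Filter.Eventually.of_forall fun t => (hP.1.mul ((Complex.continuous_exp.comp
      (continuous_const.mul hLc)).mul hW)).aestronglyMeasurable)
    (by simpa using hP.integrable hN hE hEt hl J K)
    ((hP.1.mul (((Complex.continuous_exp.comp
      (continuous_const.mul hLc)).mul hLc).mul hW)).aestronglyMeasurable)
    (Filter.Eventually.of_forall fun Φ t ht => ?_) hbound
    (Filter.Eventually.of_forall fun Φ t _ => ?_)
  · have heq : lszMoment N E Et lam (fun Φ => P Φ * L Φ) J K =
        ∫ Φ, P Φ * ((Complex.exp (0 * L Φ) * L Φ) * lszIntegrand N E Et lam J K Φ) := by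
      unfold lszMoment
      congr 1
      ext Φ
      simp [mul_assoc]
    rw [heq]
    exact hmain.2
  · have ht' : ‖t‖ ≤ 1 := by simpa using (Metric.mem_ball.1 ht).le
    have hexp : ‖Complex.exp (t * L Φ)‖ ≤ ‖Complex.exp ((R * entryL1 Φ : ℝ) : ℂ)‖ := by
      rw [Complex.norm_exp, Complex.norm_exp, Complex.ofReal_re, Real.exp_le_exp]
      refine (Complex.re_le_norm _).trans ?_
      rw [norm_mul]
      calc ‖t‖ * ‖L Φ‖ ≤ 1 * ‖L Φ‖ := mul_le_mul_of_nonneg_right ht' (norm_nonneg _)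
        _ ≤ _ := by rw [one_mul]; exact hL Φ
    simp only [norm_mul]
    calc _ = ‖P Φ‖ * ‖L Φ‖ * ‖Complex.exp (t * L Φ)‖ * ‖lszIntegrand N E Et lam J K Φ‖ := by ring
      _ ≤ _ := by gcongr
  · have h1 : HasDerivAt (fun t : ℂ => t * L Φ) (L Φ) t := by
      simpa using (hasDerivAt_id t).mul_const (L Φ)
    exact (h1.cexp.mul_const _).const_mul _

lemma lszIntegrand_add_J (N : ℕ) (E Et : Fin N → ℝ) (lam : ℝ) (J K Φ : Fin N → Fin N → ℂ)
    (a b : Fin N) (t : ℂ) :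
    lszIntegrand N E Et lam (J + t • eMat N a b) K Φ =
      Complex.exp (t * ((N : ℂ) * (starRingEnd ℂ) (Φ a b))) *
        lszIntegrand N E Et lam J K Φ := by
  have h : ∑ m, ∑ n, (J + t • eMat N a b) n m * (starRingEnd ℂ) (Φ n m)
      = (∑ m, ∑ n, J n m * (starRingEnd ℂ) (Φ n m)) + t * (starRingEnd ℂ) (Φ a b) := by
    simp only [Pi.add_apply, Pi.smul_apply, smul_eq_mul, eMat, add_mul, Finset.sum_add_distrib]
    congr 1
    rw [Finset.sum_eq_single b, Finset.sum_eq_single a] <;> simp +contextual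
  unfold lszIntegrand
  rw [h, ← Complex.exp_add]
  congr 1
  ring

lemma lszIntegrand_add_K (N : ℕ) (E Et : Fin N → ℝ) (lam : ℝ) (J K Φ : Fin N → Fin N → ℂ)
    (a b : Fin N) (t : ℂ) :
    lszIntegrand N E Et lam J (K + t • eMat N a b) Φ =
      Complex.exp (t * ((N : ℂ) * Φ b a)) * lszIntegrand N E Et lam J K Φ := by
  have h : ∑ m, ∑ n, (K + t • eMat N a b) m n * Φ n m
      = (∑ m, ∑ n, K m n * Φ n m) + t * Φ b a := by
    simp only [Pi.add_apply, Pi.smul_apply, smul_eq_mul, eMat, add_mul, Finset.sum_add_distrib]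
    congr 1
    rw [Finset.sum_eq_single a, Finset.sum_eq_single b] <;> simp +contextual
  unfold lszIntegrand
  rw [h, ← Complex.exp_add]
  congr 1
  ring

lemma hasDerivAt_moment_J {N : ℕ} (hN : 1 ≤ N) {E Et : Fin N → ℝ}
    (hE : ∀ n, 0 < E n) (hEt : ∀ n, 0 < Et n) {lam : ℝ} (hl : 0 ≤ lam)
    (J K : Fin N → Fin N → ℂ) {P : (Fin N → Fin N → ℂ) → ℂ} (hP : ExpBdd P) (a b : Fin N) :
    HasDerivAt (fun t : ℂ => lszMoment N E Et lam P (J + t • eMat N a b) K)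
      (lszMoment N E Et lam (fun Φ => P Φ * ((N : ℂ) * (starRingEnd ℂ) (Φ a b))) J K) 0 := by
  unfold lszMoment
  simp_rw [lszIntegrand_add_J]
  refine hasDerivAt_integral_exp hN hE hEt hl J K hP
    (continuous_const.mul (Complex.continuous_conj.comp (continuous_entry a b))) N
    (Nat.cast_nonneg _) fun Φ => ?_
  simpa using mul_le_mul_of_nonneg_left (norm_entry_le Φ a b) (Nat.cast_nonneg (α := ℝ) N)

lemma hasDerivAt_moment_K {N : ℕ} (hN : 1 ≤ N) {E Et : Fin N → ℝ}
    (hE : ∀ n, 0 < E n) (hEt : ∀ n, 0 < Et n) {lam : ℝ} (hl : 0 ≤ lam)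
    (J K : Fin N → Fin N → ℂ) {P : (Fin N → Fin N → ℂ) → ℂ} (hP : ExpBdd P) (a b : Fin N) :
    HasDerivAt (fun t : ℂ => lszMoment N E Et lam P J (K + t • eMat N a b))
      (lszMoment N E Et lam (fun Φ => P Φ * ((N : ℂ) * Φ b a)) J K) 0 := by
  unfold lszMoment
  simp_rw [lszIntegrand_add_K]
  refine hasDerivAt_integral_exp hN hE hEt hl J K hP
    (continuous_const.mul (continuous_entry b a)) N (Nat.cast_nonneg _) fun Φ => ?_
  simpa using mul_le_mul_of_nonneg_left (norm_entry_le Φ b a) (Nat.cast_nonneg (α := ℝ) N)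

/-- A quotient `f/g` has derivative `f'/g` where `f * g'` vanishes. -/
lemma deriv_div_of_mul_eq_zero {f g : ℂ → ℂ} {f' g' : ℂ} (hf : HasDerivAt f f' 0)
    (hg : HasDerivAt g g' 0) (h0 : g 0 ≠ 0) (h : f 0 * g' = 0) :
    deriv (fun t => f t / g t) 0 = f' / g 0 := by
  rw [(hf.fun_div hg h0).deriv, h, sub_zero, pow_two, mul_div_mul_right _ _ h0]

/-! ### Phase symmetries -/

/-- An integrand multiplied by a constant `c ≠ 1` under some entrywise multiplication by phases has
vanishing integral. -/
lemma integral_eq_zero_of_phase {N : ℕ} (w : Fin N → Fin N → ℂ) (hw : ∀ n m, ‖w n m‖ = 1)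
    (f : (Fin N → Fin N → ℂ) → ℂ) (c : ℂ) (hc : c ≠ 1)
    (h : ∀ Φ, f (fun n m => w n m * Φ n m) = c * f Φ) : ∫ Φ, f Φ = 0 := by
  have hmp : ∀ n m, MeasurePreserving (fun z : ℂ => w n m * z) := fun n m =>
    (rotation ⟨w n m, by simp [Submonoid.unitSphere, hw]⟩).measurePreserving
  have hmp2 : MeasurePreserving (fun (Φ : Fin N → Fin N → ℂ) n m => w n m * Φ n m) :=
    volume_preserving_pi (f := fun n (v : Fin N → ℂ) m => w n m * v m) fun n =>
      volume_preserving_pi (f := fun m (z : ℂ) => w n m * z) fun m => hmp n m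
  have hw0 : ∀ n m, w n m ≠ 0 := fun n m => by
    rw [← norm_ne_zero_iff, hw]; exact one_ne_zero
  have hemb : MeasurableEmbedding (fun (Φ : Fin N → Fin N → ℂ) n m => w n m * Φ n m) := by
    let e : (Fin N → Fin N → ℂ) ≃ₜ (Fin N → Fin N → ℂ) :=
      Homeomorph.piCongrRight fun n => Homeomorph.piCongrRight fun m =>
        Homeomorph.mulLeft₀ (w n m) (hw0 n m)
    exact e.measurableEmbedding
  have h1 := hmp2.integral_comp hemb f
  simp_rw [h, integral_const_mul] at h1
  have h2 : (c - 1) * ∫ Φ, f Φ = 0 := by rw [sub_mul, h1]; ring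
  exact (mul_eq_zero.1 h2).resolve_left (sub_ne_zero.2 hc)

/-- Entrywise phases preserve the quadratic part of the action. If they also preserve the quartic
part, or if `λ = 0`, then a moment vanishes as soon as the sources are invariant and the observable
is multiplied by a constant `c ≠ 1`. -/
lemma moment_eq_zero_of_phase {N : ℕ} (E Et : Fin N → ℝ) (lam : ℝ)
    (w : Fin N → Fin N → ℂ) (hw : ∀ n m, ‖w n m‖ = 1)
    (hq : lam = 0 ∨ ∀ Φ, quartPart N (fun n m => w n m * Φ n m) = quartPart N Φ)
    {J K : Fin N → Fin N → ℂ} (hJ : ∀ n m, J n m * (starRingEnd ℂ) (w n m) = J n m)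
    (hK : ∀ n m, K m n * w n m = K m n)
    {P : (Fin N → Fin N → ℂ) → ℂ} (c : ℂ) (hc : c ≠ 1)
    (h : ∀ Φ, P (fun n m => w n m * Φ n m) = c * P Φ) :
    lszMoment N E Et lam P J K = 0 := by
  refine integral_eq_zero_of_phase w hw _ c hc fun Φ => ?_
  have h1 : quadPart N E Et (fun n m => w n m * Φ n m) = quadPart N E Et Φ := by
    simp [quadPart, hw]
  have h2 : lam / 2 * quartPart N (fun n m => w n m * Φ n m) = lam / 2 * quartPart N Φ := by
    rcases hq with rfl | hq
    · simp
    · rw [hq]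
  rw [lszIntegrand_eq, lszIntegrand_eq, h, h1, h2]
  simp only [map_mul, ← mul_assoc, hJ, hK]

/-- The quartic interaction is invariant under flipping the sign of one row. -/
lemma quartPart_row (N : ℕ) (p : Fin N) (Φ : Fin N → Fin N → ℂ) :
    quartPart N (fun n m => (if n = p then -1 else 1) * Φ n m) = quartPart N Φ := by
  unfold quartPart
  refine Finset.sum_congr rfl fun a _ => Finset.sum_congr rfl fun c _ => ?_
  congr 1
  refine Finset.sum_congr rfl fun b _ => ?_
  beta_reduce
  split_ifs <;> simp

/-- The quartic interaction is invariant under flipping the sign of one column. -/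
lemma quartPart_col (N : ℕ) (q : Fin N) (Φ : Fin N → Fin N → ℂ) :
    quartPart N (fun n m => (if m = q then -1 else 1) * Φ n m) = quartPart N Φ := by
  unfold quartPart
  refine Finset.sum_congr rfl fun a _ => Finset.sum_congr rfl fun c _ => ?_
  beta_reduce
  split_ifs <;> simp

lemma neg_one_ne_one_complex : (-1 : ℂ) ≠ 1 := by norm_num

/-! ### The four-point function as a normalised moment -/

/-- The product of fields conjugate to the four sources of the four-point function. -/
noncomputable def fourField (N : ℕ) (p₁ q₁ p₂ q₂ : Fin N) (Φ : Fin N → Fin N → ℂ) : ℂ :=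
  Φ p₁ q₂ * (starRingEnd ℂ) (Φ p₂ q₂) * Φ p₂ q₁ * (starRingEnd ℂ) (Φ p₁ q₁)

lemma expBdd_fourField (N : ℕ) (p₁ q₁ p₂ q₂ : Fin N) : ExpBdd (fourField N p₁ q₁ p₂ q₂) :=
  (((ExpBdd.entry _ _).mul (ExpBdd.conj_entry _ _)).mul (ExpBdd.entry _ _)).mul
    (ExpBdd.conj_entry _ _)

lemma lszMoment_one_eq (N : ℕ) (E Et : Fin N → ℝ) (lam : ℝ) :
    lszMoment N E Et lam (fun _ => 1) 0 0 = ((∫ Φ : Fin N → Fin N → ℂ,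
      Real.exp (-(N : ℝ) * (quadPart N E Et Φ + lam / 2 * quartPart N Φ)) : ℝ) : ℂ) := by
  unfold lszMoment
  simp_rw [lszIntegrand_zero, one_mul]
  exact integral_ofReal

/-- The source-free partition function is a positive real number. -/
lemma lszMoment_one_mem_slitPlane {N : ℕ} (hN : 1 ≤ N) {E Et : Fin N → ℝ}
    (hE : ∀ n, 0 < E n) (hEt : ∀ n, 0 < Et n) {lam : ℝ} (hl : 0 ≤ lam) :
    lszMoment N E Et lam (fun _ => 1) 0 0 ∈ Complex.slitPlane := by
  rw [lszMoment_one_eq, Complex.ofReal_mem_slitPlane]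
  have h := ((ExpBdd.const (N := N) 1).integrable hN hE hEt hl 0 0).re
  simp_rw [lszIntegrand_zero, one_mul] at h
  have hrow : (volume : Measure (Fin N → ℂ)).IsOpenPosMeasure :=
    (inferInstance : (Measure.pi fun _ : Fin N => (volume : Measure ℂ)).IsOpenPosMeasure)
  have hpos : (volume : Measure (Fin N → Fin N → ℂ)).IsOpenPosMeasure :=
    (inferInstance : (Measure.pi fun _ : Fin N => (volume : Measure (Fin N → ℂ))).IsOpenPosMeasure)
  have : NeZero (volume : Measure (Fin N → Fin N → ℂ)) :=
    ⟨Measure.measure_univ_ne_zero.1 (isOpen_univ.measure_ne_zero _ Set.univ_nonempty)⟩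
  exact integral_exp_pos h

/-- All disconnected contributions to the fourth cumulant vanish: by sign flips of rows and columns,
at each differentiation of a quotient of moments either the numerator or the derivative of the
denominator is zero. -/
lemma lszG4_eq {N : ℕ} (hN : 1 ≤ N) {E Et : Fin N → ℝ}
    (hE : ∀ n, 0 < E n) (hEt : ∀ n, 0 < Et n) {p₁ p₂ q₁ q₂ : Fin N} (hp : p₁ ≠ p₂) (hq : q₁ ≠ q₂)
    {lam : ℝ} (hl : 0 ≤ lam) :
    lszG4 N E Et p₁ q₁ p₂ q₂ lam = (N : ℂ) ^ 3 *
      (lszMoment N E Et lam (fourField N p₁ q₁ p₂ q₂) 0 0 /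
        lszMoment N E Et lam (fun _ => 1) 0 0) := by
  set M := lszMoment N E Et lam with hM
  have hne : ∀ {J K}, M (fun _ => 1) J K ∈ Complex.slitPlane → M (fun _ => 1) J K ≠ 0 :=
    fun h => Complex.slitPlane_ne_zero h
  -- Openness of the slit plane and continuity of `Z` along source directions.
  have openJ : ∀ (J K) (a b : Fin N), M (fun _ => 1) J K ∈ Complex.slitPlane →
      ∀ᶠ t in nhds (0 : ℂ), M (fun _ => 1) (J + t • eMat N a b) K ∈ Complex.slitPlane := by
    intro J K a b h
    refine (hasDerivAt_moment_J hN hE hEt hl J K (ExpBdd.const 1) a b).continuousAt.eventually_mem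
      (Complex.isOpen_slitPlane.mem_nhds ?_)
    simpa using h
  have openK : ∀ (J K) (a b : Fin N), M (fun _ => 1) J K ∈ Complex.slitPlane →
      ∀ᶠ t in nhds (0 : ℂ), M (fun _ => 1) J (K + t • eMat N a b) ∈ Complex.slitPlane := by
    intro J K a b h
    refine (hasDerivAt_moment_K hN hE hEt hl J K (ExpBdd.const 1) a b).continuousAt.eventually_mem
      (Complex.isOpen_slitPlane.mem_nhds ?_)
    simpa using h
  let D : (Fin N → Fin N → ℂ) → ℂ := fun Φ => 1 * ((N : ℂ) * Φ p₁ q₂)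
  let CD : (Fin N → Fin N → ℂ) → ℂ := fun Φ => D Φ * ((N : ℂ) * (starRingEnd ℂ) (Φ p₂ q₂))
  let BCD : (Fin N → Fin N → ℂ) → ℂ := fun Φ => CD Φ * ((N : ℂ) * Φ p₂ q₁)
  let ABCD : (Fin N → Fin N → ℂ) → ℂ := fun Φ => BCD Φ * ((N : ℂ) * (starRingEnd ℂ) (Φ p₁ q₁))
  have hD : ExpBdd D := (ExpBdd.const 1).mul ((ExpBdd.const _).mul (ExpBdd.entry _ _))
  have hCD : ExpBdd CD := hD.mul ((ExpBdd.const _).mul (ExpBdd.conj_entry _ _))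
  have hBCD : ExpBdd BCD := hCD.mul ((ExpBdd.const _).mul (ExpBdd.entry _ _))
  set F := fun J K => Complex.log (lszZ N E Et lam J K) with hF
  have s4 : ∀ J K, M (fun _ => 1) J K ∈ Complex.slitPlane →
      dK N q₂ p₁ F J K = M D J K / M (fun _ => 1) J K := by
    intro J K h
    have h1 := (hasDerivAt_moment_K hN hE hEt hl J K (ExpBdd.const 1) q₂ p₁).clog
      (by simpa using h)
    simp only [dK, hF, lszZ_eq_moment]
    rw [h1.deriv]
    simp [D, M]
  -- `Φ p₁ q₂` is odd under the sign flip of column `q₂`, which fixes the sources `J`, `K` below.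
  have s3 : ∀ t₁ t₂ : ℂ,
      M (fun _ => 1) (0 + t₁ • eMat N p₁ q₁) (0 + t₂ • eMat N q₁ p₂) ∈ Complex.slitPlane →
      dJ N p₂ q₂ (dK N q₂ p₁ F) (0 + t₁ • eMat N p₁ q₁) (0 + t₂ • eMat N q₁ p₂) =
        M CD (0 + t₁ • eMat N p₁ q₁) (0 + t₂ • eMat N q₁ p₂) /
          M (fun _ => 1) (0 + t₁ • eMat N p₁ q₁) (0 + t₂ • eMat N q₁ p₂) := by
    intro t₁ t₂ h
    have hev := (openJ _ _ p₂ q₂ h).mono fun t ht => s4 _ _ ht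
    have hzero : M D (0 + t₁ • eMat N p₁ q₁) (0 + t₂ • eMat N q₁ p₂) = 0 := by
      refine moment_eq_zero_of_phase E Et lam (fun _ m => if m = q₂ then -1 else 1)
        (fun n m => by split_ifs <;> simp) (Or.inr (quartPart_col N q₂)) (fun n m => ?_)
        (fun n m => ?_) (-1) neg_one_ne_one_complex (fun Φ => by simp [D])
      · by_cases hm : m = q₂
        · subst hm; simp [eMat, hq.symm]
        · simp [hm]
      · by_cases hm : m = q₂
        · subst hm; simp [eMat, hq.symm]
        · simp [hm]
    simp only [dJ] at hev ⊢
    rw [Filter.EventuallyEq.deriv_eq hev,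
      deriv_div_of_mul_eq_zero (hasDerivAt_moment_J hN hE hEt hl _ _ hD p₂ q₂)
        (hasDerivAt_moment_J hN hE hEt hl _ _ (ExpBdd.const 1) p₂ q₂)]
    · simp [CD, M]
    · simpa using hne h
    · simp only [zero_smul, add_zero]
      rw [← hM, hzero, zero_mul]
  have s2 : ∀ t₁ : ℂ, M (fun _ => 1) (0 + t₁ • eMat N p₁ q₁) 0 ∈ Complex.slitPlane →
      dK N q₁ p₂ (dJ N p₂ q₂ (dK N q₂ p₁ F)) (0 + t₁ • eMat N p₁ q₁) 0 =
        M BCD (0 + t₁ • eMat N p₁ q₁) 0 / M (fun _ => 1) (0 + t₁ • eMat N p₁ q₁) 0 := by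
    intro t₁ h
    have hev := (openK _ _ q₁ p₂ h).mono fun t ht => s3 t₁ t ht
    have hzero : M (fun Φ => 1 * ((N : ℂ) * Φ p₂ q₁)) (0 + t₁ • eMat N p₁ q₁) 0 = 0 := by
      refine moment_eq_zero_of_phase E Et lam (fun n _ => if n = p₂ then -1 else 1)
        (fun n m => by split_ifs <;> simp) (Or.inr (quartPart_row N p₂)) (fun n m => ?_)
        (fun n m => by simp) (-1) neg_one_ne_one_complex (fun Φ => by simp)
      by_cases hm : n = p₂
      · subst hm; simp [eMat, hp.symm]
      · simp [hm]
    simp only [dK] at hev ⊢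
    rw [Filter.EventuallyEq.deriv_eq hev,
      deriv_div_of_mul_eq_zero (hasDerivAt_moment_K hN hE hEt hl _ _ hCD q₁ p₂)
        (hasDerivAt_moment_K hN hE hEt hl _ _ (ExpBdd.const 1) q₁ p₂)]
    · simp [BCD, M]
    · simpa using hne h
    · rw [← hM, hzero, mul_zero]
  have h0 : M (fun _ => 1) 0 0 ∈ Complex.slitPlane := lszMoment_one_mem_slitPlane hN hE hEt hl
  have s1 : dJ N p₁ q₁ (dK N q₁ p₂ (dJ N p₂ q₂ (dK N q₂ p₁ F))) 0 0 =
      M ABCD 0 0 / M (fun _ => 1) 0 0 := by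
    have hev := (openJ _ _ p₁ q₁ h0).mono fun t ht => s2 t ht
    have hzero : M (fun Φ => 1 * ((N : ℂ) * (starRingEnd ℂ) (Φ p₁ q₁))) 0 0 = 0 :=
      moment_eq_zero_of_phase E Et lam (fun n _ => if n = p₁ then -1 else 1)
        (fun n m => by split_ifs <;> simp) (Or.inr (quartPart_row N p₁)) (fun n m => by simp)
        (fun n m => by simp) (-1) neg_one_ne_one_complex (fun Φ => by simp)
    rw [dJ, Filter.EventuallyEq.deriv_eq hev,
      deriv_div_of_mul_eq_zero (hasDerivAt_moment_J hN hE hEt hl _ _ hBCD p₁ q₁)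
        (hasDerivAt_moment_J hN hE hEt hl _ _ (ExpBdd.const 1) p₁ q₁)]
    · simp [ABCD, M]
    · simpa using hne h0
    · rw [← hM, hzero, mul_zero]
  have hN0 : (N : ℂ) ≠ 0 := by exact_mod_cast (by lia : N ≠ 0)
  have hA : M ABCD 0 0 = (N : ℂ) ^ 4 * M (fourField N p₁ q₁ p₂ q₂) 0 0 := by
    simp only [M, lszMoment]
    rw [← integral_const_mul]
    congr 1
    ext Φ
    simp only [ABCD, BCD, CD, D, fourField]
    ring
  rw [lszG4, s1, hA]
  field_simp

/-! ### Gaussian moments and Wick contractions -/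

/-- The variance of the complex Gaussian weight `exp(-b|z|²)` is `1/b`. -/
lemma integral_sq_mul_gaussian (b : ℝ) (hb : 0 < b) :
    ∫ z : ℂ, ‖z‖ ^ 2 * Real.exp (-b * ‖z‖ ^ 2) = 1 / b * ∫ z : ℂ, Real.exp (-b * ‖z‖ ^ 2) := by
  have h2 := Complex.integral_rpow_mul_exp_neg_mul_rpow (p := 2) (q := 2) (b := b)
    (by norm_num) (by norm_num) hb
  have h0 := Complex.integral_rpow_mul_exp_neg_mul_rpow (p := 2) (q := 0) (b := b)
    (by norm_num) (by norm_num) hb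
  simp only [Real.rpow_two, Real.rpow_zero, one_mul] at h2 h0
  rw [h2, h0, show (-(2 + 2) / 2 : ℝ) = -1 + -1 by norm_num,
    show ((2 + 2) / 2 : ℝ) = 1 + 1 by norm_num, show (-(0 + 2) / 2 : ℝ) = -1 by norm_num,
    show ((0 + 2) / 2 : ℝ) = 1 by norm_num, Real.rpow_add hb, Real.Gamma_add_one one_ne_zero,
    Real.rpow_neg_one]
  ring

/-- At `λ = 0` the entries of `Φ` are independent complex Gaussians, the entry `(n,m)` having
variance `1/(N(E_n + Ẽ_m))`. -/
lemma integral_prod_sq_gaussian {N : ℕ} (hN : 1 ≤ N) {E Et : Fin N → ℝ}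
    (hE : ∀ n, 0 < E n) (hEt : ∀ n, 0 < Et n) (S : Finset (Fin N × Fin N)) :
    ∫ Φ : Fin N → Fin N → ℂ, (∏ x ∈ S, ‖Φ x.1 x.2‖ ^ 2) *
        Real.exp (-(N : ℝ) * quadPart N E Et Φ) =
      (∏ x ∈ S, 1 / ((N : ℝ) * (E x.1 + Et x.2))) *
        ∫ Φ : Fin N → Fin N → ℂ, Real.exp (-(N : ℝ) * quadPart N E Et Φ) := by
  have hN' : (0 : ℝ) < N := by exact_mod_cast hN
  have hfub : ∀ S : Finset (Fin N × Fin N),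
      ∫ Φ : Fin N → Fin N → ℂ, (∏ x ∈ S, ‖Φ x.1 x.2‖ ^ 2) *
        Real.exp (-(N : ℝ) * quadPart N E Et Φ) =
      ∏ n, ∏ m, ∫ z : ℂ, (if (n, m) ∈ S then ‖z‖ ^ 2 else 1) *
        Real.exp (-(N * (E n + Et m)) * ‖z‖ ^ 2) := by
    intro S
    have h1 := integral_fintype_prod_volume_eq_prod (𝕜 := ℝ)
      (fun (n : Fin N) (v : Fin N → ℂ) => ∏ m, ((if (n, m) ∈ S then ‖v m‖ ^ 2 else 1) *
        Real.exp (-(N * (E n + Et m)) * ‖v m‖ ^ 2)))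
    have h2 : ∀ n, _ := fun n => integral_fintype_prod_volume_eq_prod (𝕜 := ℝ)
      (fun (m : Fin N) (z : ℂ) => (if (n, m) ∈ S then ‖z‖ ^ 2 else 1) *
        Real.exp (-(N * (E n + Et m)) * ‖z‖ ^ 2))
    simp_rw [h2] at h1
    rw [← h1]
    congr 1
    ext Φ
    simp_rw [Finset.prod_mul_distrib]
    congr 1
    · rw [← Fintype.prod_prod_type' (f := fun n m => if (n, m) ∈ S then ‖Φ n m‖ ^ 2 else 1)]
      simp only [Prod.mk.eta]
      rw [Finset.prod_ite_mem, Finset.univ_inter]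
    · simp_rw [← Real.exp_sum]
      congr 1
      unfold quadPart
      simp_rw [Finset.mul_sum]
      refine Finset.sum_congr rfl fun n _ => Finset.sum_congr rfl fun m _ => ?_
      ring
  have h0 := hfub ∅
  simp only [Finset.prod_empty, one_mul, Finset.notMem_empty, if_false] at h0
  rw [hfub, h0]
  have hone : ∀ n m, ∫ z : ℂ, (if (n, m) ∈ S then ‖z‖ ^ 2 else 1) *
        Real.exp (-(N * (E n + Et m)) * ‖z‖ ^ 2) =
      (if (n, m) ∈ S then 1 / ((N : ℝ) * (E n + Et m)) else 1) *
        ∫ z : ℂ, Real.exp (-(N * (E n + Et m)) * ‖z‖ ^ 2) := by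
    intro n m
    split_ifs
    · exact integral_sq_mul_gaussian _ (mul_pos hN' (add_pos (hE n) (hEt m)))
    · simp
  simp_rw [hone, Finset.prod_mul_distrib]
  congr 1
  rw [← Fintype.prod_prod_type' (f := fun n m =>
    if (n, m) ∈ S then 1 / ((N : ℝ) * (E n + Et m)) else 1)]
  simp only [Prod.mk.eta]
  rw [Finset.prod_ite_mem, Finset.univ_inter]

/-- One term of the quartic interaction. -/
noncomputable def quartTerm (N : ℕ) (a c b d : Fin N) (Φ : Fin N → Fin N → ℂ) : ℂ :=
  ((starRingEnd ℂ) (Φ b a) * Φ b c) * ((starRingEnd ℂ) (Φ d c) * Φ d a)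

lemma expBdd_quartTerm (N : ℕ) (a c b d : Fin N) : ExpBdd (quartTerm N a c b d) :=
  ((ExpBdd.conj_entry b a).mul (ExpBdd.entry b c)).mul
    ((ExpBdd.conj_entry d c).mul (ExpBdd.entry d a))

/-- The phase picked up by `fourField * quartTerm` under entrywise multiplication by `w`. -/
lemma fourField_mul_quartTerm_phase (N : ℕ) (p₁ q₁ p₂ q₂ a c b d : Fin N)
    (w Φ : Fin N → Fin N → ℂ) :
    fourField N p₁ q₁ p₂ q₂ (fun n m => w n m * Φ n m) *
        quartTerm N a c b d (fun n m => w n m * Φ n m) =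
      (fourField N p₁ q₁ p₂ q₂ w * quartTerm N a c b d w) *
        (fourField N p₁ q₁ p₂ q₂ Φ * quartTerm N a c b d Φ) := by
  simp only [fourField, quartTerm, map_mul]
  ring

/-- The external field `conj Φ_{p₁q₁}` has to be contracted with an unconjugated field of the
vertex. Otherwise multiplying the entry `(p₁,q₁)` by `i` multiplies the integrand by `(-i)^k` where
`k ∈ {1,2,3}` counts the occurrences of `conj Φ_{p₁q₁}`. -/
lemma moment_quartTerm_eq_zero_fst {N : ℕ} (E Et : Fin N → ℝ) {p₁ q₁ p₂ q₂ : Fin N}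
    (hp : p₁ ≠ p₂) (hq : q₁ ≠ q₂) (a c b d : Fin N)
    (h1 : ¬(b = p₁ ∧ c = q₁)) (h2 : ¬(d = p₁ ∧ a = q₁)) :
    lszMoment N E Et 0 (fun Φ => fourField N p₁ q₁ p₂ q₂ Φ * quartTerm N a c b d Φ) 0 0 = 0 := by
  refine moment_eq_zero_of_phase E Et 0 (fun n m => if n = p₁ ∧ m = q₁ then Complex.I else 1)
    (fun n m => by split_ifs <;> simp) (Or.inl rfl) (fun n m => by simp) (fun n m => by simp) _ ?_
    (fun Φ => fourField_mul_quartTerm_phase N p₁ q₁ p₂ q₂ a c b d _ Φ)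
  simp only [fourField, quartTerm, h1, h2, hp.symm, hq.symm, if_false, and_false, false_and,
    and_self, if_true]
  split_ifs <;> norm_num [Complex.ext_iff]

/-- The same for the external field `conj Φ_{p₂q₂}`. -/
lemma moment_quartTerm_eq_zero_snd {N : ℕ} (E Et : Fin N → ℝ) {p₁ q₁ p₂ q₂ : Fin N}
    (hp : p₁ ≠ p₂) (hq : q₁ ≠ q₂) (a c b d : Fin N)
    (h1 : ¬(b = p₂ ∧ c = q₂)) (h2 : ¬(d = p₂ ∧ a = q₂)) :
    lszMoment N E Et 0 (fun Φ => fourField N p₁ q₁ p₂ q₂ Φ * quartTerm N a c b d Φ) 0 0 = 0 := by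
  refine moment_eq_zero_of_phase E Et 0 (fun n m => if n = p₂ ∧ m = q₂ then Complex.I else 1)
    (fun n m => by split_ifs <;> simp) (Or.inl rfl) (fun n m => by simp) (fun n m => by simp) _ ?_
    (fun Φ => fourField_mul_quartTerm_phase N p₁ q₁ p₂ q₂ a c b d _ Φ)
  simp only [fourField, quartTerm, h1, h2, hp, hq, if_false, and_false, false_and,
    and_self, if_true]
  split_ifs <;> norm_num [Complex.ext_iff]

/-- The Gaussian expectation of the product of the four squared moduli. -/
lemma moment_sq_eq {N : ℕ} (hN : 1 ≤ N) {E Et : Fin N → ℝ}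
    (hE : ∀ n, 0 < E n) (hEt : ∀ n, 0 < Et n) {p₁ q₁ p₂ q₂ : Fin N}
    (hp : p₁ ≠ p₂) (hq : q₁ ≠ q₂) :
    lszMoment N E Et 0 (fun Φ => ((‖Φ p₁ q₁‖ ^ 2 * (‖Φ p₂ q₁‖ ^ 2 * (‖Φ p₂ q₂‖ ^ 2 *
        ‖Φ p₁ q₂‖ ^ 2)) : ℝ) : ℂ)) 0 0 =
      1 / ((N : ℂ) ^ 4 * ((((E p₁ + Et q₁ : ℝ)) : ℂ) * (((E p₂ + Et q₁ : ℝ)) : ℂ) *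
        (((E p₂ + Et q₂ : ℝ)) : ℂ) * (((E p₁ + Et q₂ : ℝ)) : ℂ))) *
      lszMoment N E Et 0 (fun _ => 1) 0 0 := by
  have h := integral_prod_sq_gaussian hN hE hEt
    ({(p₁, q₁), (p₂, q₁), (p₂, q₂), (p₁, q₂)} : Finset (Fin N × Fin N))
  have hprod : ∀ f : Fin N × Fin N → ℝ,
      ∏ x ∈ ({(p₁, q₁), (p₂, q₁), (p₂, q₂), (p₁, q₂)} : Finset (Fin N × Fin N)), f x =
        f (p₁, q₁) * (f (p₂, q₁) * (f (p₂, q₂) * f (p₁, q₂))) := by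
    intro f
    rw [Finset.prod_insert, Finset.prod_insert, Finset.prod_insert, Finset.prod_singleton] <;>
      simp [hp, hq, hp.symm]
  simp_rw [hprod] at h
  rw [lszMoment_one_eq]
  unfold lszMoment
  simp_rw [lszIntegrand_zero, ← Complex.ofReal_mul, zero_div, zero_mul, add_zero]
  rw [integral_complex_ofReal, h]
  push_cast
  have hN' : (N : ℂ) ≠ 0 := by exact_mod_cast (by lia : N ≠ 0)
  have hne : ∀ n m, (E n : ℂ) + (Et m : ℂ) ≠ 0 := fun n m => by
    exact_mod_cast (add_pos (hE n) (hEt m)).ne'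
  have := hne p₁ q₁
  have := hne p₂ q₁
  have := hne p₂ q₂
  have := hne p₁ q₂
  field_simp

lemma lszMoment_sum {N : ℕ} (hN : 1 ≤ N) {E Et : Fin N → ℝ}
    (hE : ∀ n, 0 < E n) (hEt : ∀ n, 0 < Et n) {lam : ℝ} (hl : 0 ≤ lam) (J K : Fin N → Fin N → ℂ)
    {ι : Type*} (s : Finset ι) {P : ι → (Fin N → Fin N → ℂ) → ℂ} (hP : ∀ i, ExpBdd (P i)) :
    lszMoment N E Et lam (fun Φ => ∑ i ∈ s, P i Φ) J K = ∑ i ∈ s, lszMoment N E Et lam (P i) J K := by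
  unfold lszMoment
  simp_rw [Finset.sum_mul]
  exact integral_finsetSum _ fun i _ => (hP i).integrable hN hE hEt hl J K

/-- Wick's theorem for the one-vertex graph: exactly two of the index quadruples of the vertex
contribute, and they contribute equally. -/
lemma moment_fourField_mul_quartPart {N : ℕ} (hN : 1 ≤ N) {E Et : Fin N → ℝ}
    (hE : ∀ n, 0 < E n) (hEt : ∀ n, 0 < Et n) {p₁ q₁ p₂ q₂ : Fin N}
    (hp : p₁ ≠ p₂) (hq : q₁ ≠ q₂) :
    lszMoment N E Et 0 (fun Φ => fourField N p₁ q₁ p₂ q₂ Φ * (quartPart N Φ : ℂ)) 0 0 =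
      2 * (1 / ((N : ℂ) ^ 4 * ((((E p₁ + Et q₁ : ℝ)) : ℂ) * (((E p₂ + Et q₁ : ℝ)) : ℂ) *
        (((E p₂ + Et q₂ : ℝ)) : ℂ) * (((E p₁ + Et q₂ : ℝ)) : ℂ))) *
      lszMoment N E Et 0 (fun _ => 1) 0 0) := by
  rw [← moment_sq_eq hN hE hEt hp hq]
  set X := lszMoment N E Et 0 (fun Φ => ((‖Φ p₁ q₁‖ ^ 2 * (‖Φ p₂ q₁‖ ^ 2 * (‖Φ p₂ q₂‖ ^ 2 *
        ‖Φ p₁ q₂‖ ^ 2)) : ℝ) : ℂ)) 0 0 with hX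
  have hterm : ∀ a c b d : Fin N,
      lszMoment N E Et 0 (fun Φ => fourField N p₁ q₁ p₂ q₂ Φ * quartTerm N a c b d Φ) 0 0 =
        (if a = q₂ then if c = q₁ then if b = p₁ then if d = p₂ then X else 0 else 0 else 0 else 0)
        + (if a = q₁ then if c = q₂ then if b = p₂ then if d = p₁ then X else 0 else 0 else 0
          else 0) := by
    intro a c b d
    have hval : ∀ Φ : Fin N → Fin N → ℂ, fourField N p₁ q₁ p₂ q₂ Φ * quartTerm N q₂ q₁ p₁ p₂ Φ =
        ((‖Φ p₁ q₁‖ ^ 2 * (‖Φ p₂ q₁‖ ^ 2 * (‖Φ p₂ q₂‖ ^ 2 * ‖Φ p₁ q₂‖ ^ 2)) : ℝ) : ℂ) := by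
      intro Φ
      simp only [fourField, quartTerm]
      push_cast
      simp only [← Complex.mul_conj']
      ring
    have hsymm : ∀ Φ : Fin N → Fin N → ℂ,
        quartTerm N q₁ q₂ p₂ p₁ Φ = quartTerm N q₂ q₁ p₁ p₂ Φ := by
      intro Φ; simp only [quartTerm]; ring
    by_cases c1 : a = q₂ ∧ c = q₁ ∧ b = p₁ ∧ d = p₂
    · obtain ⟨rfl, rfl, rfl, rfl⟩ := c1
      simp [hq.symm, hval, hX]
    by_cases c2 : a = q₁ ∧ c = q₂ ∧ b = p₂ ∧ d = p₁
    · obtain ⟨rfl, rfl, rfl, rfl⟩ := c2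
      simp [hq, hsymm, hval, hX]
    have hrhs : (if a = q₂ then if c = q₁ then if b = p₁ then if d = p₂ then X else 0 else 0 else 0
          else 0)
        + (if a = q₁ then if c = q₂ then if b = p₂ then if d = p₁ then X else 0 else 0 else 0
          else 0) = 0 := by
      simp only [← ite_and, c1, c2, if_false, add_zero]
    rw [hrhs]
    by_cases h1 : (b = p₁ ∧ c = q₁) ∨ (d = p₁ ∧ a = q₁)
    · refine moment_quartTerm_eq_zero_snd E Et hp hq a c b d ?_ ?_ <;> grind
    · rw [not_or] at h1
      exact moment_quartTerm_eq_zero_fst E Et hp hq a c b d h1.1 h1.2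
  have hF := expBdd_fourField N p₁ q₁ p₂ q₂
  have hT := expBdd_quartTerm N
  have hexpand : (fun Φ => fourField N p₁ q₁ p₂ q₂ Φ * (quartPart N Φ : ℂ)) =
      fun Φ => ∑ a, ∑ c, ∑ b, ∑ d, fourField N p₁ q₁ p₂ q₂ Φ * quartTerm N a c b d Φ := by
    ext Φ
    rw [quartPart_eq_sum]
    simp only [Finset.mul_sum, quartTerm]
  have hsum : lszMoment N E Et 0 (fun Φ => fourField N p₁ q₁ p₂ q₂ Φ * (quartPart N Φ : ℂ)) 0 0 =
      ∑ a, ∑ c, ∑ b, ∑ d, lszMoment N E Et 0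
        (fun Φ => fourField N p₁ q₁ p₂ q₂ Φ * quartTerm N a c b d Φ) 0 0 := by
    have h4 : ∀ a c b d, ExpBdd fun Φ => fourField N p₁ q₁ p₂ q₂ Φ * quartTerm N a c b d Φ :=
      fun a c b d => hF.mul (hT a c b d)
    have h3 := fun a c b => ExpBdd.sum Finset.univ (h4 a c b)
    have h2 := fun a c => ExpBdd.sum Finset.univ (h3 a c)
    have h1 := fun a => ExpBdd.sum Finset.univ (h2 a)
    rw [hexpand, lszMoment_sum hN hE hEt le_rfl 0 0 _ h1]
    refine Finset.sum_congr rfl fun a _ => ?_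
    rw [lszMoment_sum hN hE hEt le_rfl 0 0 _ (h2 a)]
    refine Finset.sum_congr rfl fun c _ => ?_
    rw [lszMoment_sum hN hE hEt le_rfl 0 0 _ (h3 a c)]
    refine Finset.sum_congr rfl fun b _ => ?_
    rw [lszMoment_sum hN hE hEt le_rfl 0 0 _ (h4 a c b)]
  rw [hsum]
  simp_rw [hterm, Finset.sum_add_distrib]
  simp [two_mul]

/-- The free four-point moment vanishes, since it is odd in the entry `(p₁,q₁)`. -/
lemma moment_fourField_zero {N : ℕ} (E Et : Fin N → ℝ) {p₁ q₁ p₂ q₂ : Fin N}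
    (hp : p₁ ≠ p₂) (hq : q₁ ≠ q₂) :
    lszMoment N E Et 0 (fourField N p₁ q₁ p₂ q₂) 0 0 = 0 := by
  refine moment_eq_zero_of_phase E Et 0 (fun n m => if n = p₁ ∧ m = q₁ then -1 else 1)
    (fun n m => by split_ifs <;> simp) (Or.inl rfl) (fun n m => by simp) (fun n m => by simp) (-1)
    neg_one_ne_one_complex fun Φ => ?_
  simp [fourField, hp.symm, hq.symm]

/-! ### Perturbation theory in the coupling -/

lemma lszIntegrand_zero_lam (N : ℕ) (E Et : Fin N → ℝ) (lam : ℝ) (Φ : Fin N → Fin N → ℂ) :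
    lszIntegrand N E Et lam 0 0 Φ =
      ((Real.exp (-(lam * (N / 2 * quartPart N Φ))) : ℝ) : ℂ) * lszIntegrand N E Et 0 0 0 Φ := by
  rw [lszIntegrand_zero, lszIntegrand_zero, ← Complex.ofReal_mul, ← Real.exp_add]
  congr 2
  ring

lemma tendsto_moment {N : ℕ} (hN : 1 ≤ N) {E Et : Fin N → ℝ}
    (hE : ∀ n, 0 < E n) (hEt : ∀ n, 0 < Et n) {P : (Fin N → Fin N → ℂ) → ℂ} (hP : ExpBdd P) :
    Filter.Tendsto (fun lam : ℝ => lszMoment N E Et lam P 0 0) (nhdsWithin 0 (Set.Ioi 0))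
      (nhds (lszMoment N E Et 0 P 0 0)) := by
  unfold lszMoment
  refine tendsto_integral_filter_of_dominated_convergence
    (fun Φ => ‖P Φ * lszIntegrand N E Et 0 0 0 Φ‖)
    (Filter.Eventually.of_forall fun lam =>
      (hP.1.mul (continuous_lszIntegrand N E Et lam 0 0)).aestronglyMeasurable)
    ?_ (hP.integrable hN hE hEt le_rfl 0 0).norm (Filter.Eventually.of_forall fun Φ => ?_)
  · filter_upwards [self_mem_nhdsWithin] with lam hlam
    refine Filter.Eventually.of_forall fun Φ => ?_
    have hlam' : 0 ≤ lam := le_of_lt hlam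
    have hq := quartPart_nonneg N Φ
    rw [lszIntegrand_zero_lam N E Et lam, norm_mul, norm_mul, norm_mul, Complex.norm_real,
      Real.norm_of_nonneg (Real.exp_pos _).le]
    refine mul_le_mul_of_nonneg_left (mul_le_of_le_one_left (norm_nonneg _) ?_) (norm_nonneg _)
    rw [Real.exp_le_one_iff, neg_nonpos]
    positivity
  · refine Filter.Tendsto.mono_left ?_ nhdsWithin_le_nhds
    have : Continuous fun lam : ℝ => P Φ * lszIntegrand N E Et lam 0 0 Φ := by
      simp_rw [lszIntegrand_zero]
      fun_prop
    exact this.tendsto 0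

/-- First-order expansion in `λ`: the difference quotient of the Boltzmann factor converges to
`-(N/2) Tr((Φ*Φ)²)` and is dominated by its modulus. -/
lemma tendsto_moment_div {N : ℕ} (hN : 1 ≤ N) {E Et : Fin N → ℝ}
    (hE : ∀ n, 0 < E n) (hEt : ∀ n, 0 < Et n) {P : (Fin N → Fin N → ℂ) → ℂ} (hP : ExpBdd P)
    (h0 : lszMoment N E Et 0 P 0 0 = 0) :
    Filter.Tendsto (fun lam : ℝ => lszMoment N E Et lam P 0 0 / (lam : ℂ))
      (nhdsWithin 0 (Set.Ioi 0))
      (nhds (-((N : ℂ) / 2) * lszMoment N E Et 0 (fun Φ => P Φ * (quartPart N Φ : ℂ)) 0 0)) := by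
  have hPT := hP.mul (expBdd_quartPart N)
  have hlim : -((N : ℂ) / 2) * lszMoment N E Et 0 (fun Φ => P Φ * (quartPart N Φ : ℂ)) 0 0 =
      ∫ Φ, ((-(N / 2 * quartPart N Φ) : ℝ) : ℂ) * (P Φ * lszIntegrand N E Et 0 0 0 Φ) := by
    unfold lszMoment
    rw [← integral_const_mul]
    congr 1
    ext Φ
    push_cast
    ring
  have hquot : ∀ lam : ℝ, 0 < lam → lszMoment N E Et lam P 0 0 / (lam : ℂ) =
      ∫ Φ, (((Real.exp (-(lam * (N / 2 * quartPart N Φ))) - 1) / lam : ℝ) : ℂ) *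
        (P Φ * lszIntegrand N E Et 0 0 0 Φ) := by
    intro lam hlam
    rw [← sub_zero (lszMoment N E Et lam P 0 0), ← h0]
    unfold lszMoment
    rw [← integral_sub (hP.integrable hN hE hEt hlam.le 0 0) (hP.integrable hN hE hEt le_rfl 0 0),
      div_eq_mul_inv, ← integral_mul_const]
    congr 1
    ext Φ
    rw [lszIntegrand_zero_lam N E Et lam]
    push_cast
    ring
  rw [hlim]
  refine Filter.Tendsto.congr' (f₁ := fun lam : ℝ =>
      ∫ Φ, (((Real.exp (-(lam * (N / 2 * quartPart N Φ))) - 1) / lam : ℝ) : ℂ) *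
        (P Φ * lszIntegrand N E Et 0 0 0 Φ)) ?_ ?_
  · filter_upwards [self_mem_nhdsWithin] with lam hlam
    exact (hquot lam hlam).symm
  refine tendsto_integral_filter_of_dominated_convergence
    (fun Φ => (N / 2 : ℝ) * ‖(P Φ * (quartPart N Φ : ℂ)) * lszIntegrand N E Et 0 0 0 Φ‖)
    (Filter.Eventually.of_forall fun lam => ?_)
    ?_ ((hPT.integrable hN hE hEt le_rfl 0 0).norm.const_mul _)
    (Filter.Eventually.of_forall fun Φ => ?_)
  · have hW := continuous_lszIntegrand N E Et 0 0 0
    have hq := continuous_quartPart N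
    have hPc := hP.1
    exact Continuous.aestronglyMeasurable (by fun_prop)
  · filter_upwards [self_mem_nhdsWithin] with lam hlam
    have hlam' : 0 < lam := hlam
    refine Filter.Eventually.of_forall fun Φ => ?_
    have hq := quartPart_nonneg N Φ
    have hx : 0 ≤ (N / 2 : ℝ) * quartPart N Φ := by positivity
    have hb : |(Real.exp (-(lam * (N / 2 * quartPart N Φ))) - 1) / lam| ≤
        N / 2 * quartPart N Φ := by
      rw [abs_div, abs_of_pos hlam', div_le_iff₀ hlam', abs_le]
      have h1 := Real.one_sub_le_exp_neg (lam * (N / 2 * quartPart N Φ))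
      have h2 : Real.exp (-(lam * (N / 2 * quartPart N Φ))) ≤ 1 :=
        Real.exp_le_one_iff.2 (by rw [neg_nonpos]; positivity)
      have h3 : 0 ≤ lam * (N / 2 * quartPart N Φ) := by positivity
      constructor <;> nlinarith
    simp only [norm_mul, Complex.norm_real, Real.norm_eq_abs]
    rw [abs_of_nonneg hq]
    calc _ ≤ (N / 2 * quartPart N Φ) * (‖P Φ‖ * ‖lszIntegrand N E Et 0 0 0 Φ‖) :=
          mul_le_mul_of_nonneg_right hb (by positivity)
      _ = _ := by ring
  · refine Filter.Tendsto.mul_const _ ((Complex.continuous_ofReal.tendsto _).comp ?_)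
    have hd : HasDerivAt (fun lam : ℝ => Real.exp (-(lam * (N / 2 * quartPart N Φ))))
        (-(N / 2 * quartPart N Φ)) 0 := by
      simpa using ((hasDerivAt_id (0 : ℝ)).mul_const (N / 2 * quartPart N Φ)).neg.exp
    have hs := hd.tendsto_slope.mono_left (nhdsGT_le_nhdsNE 0)
    refine hs.congr fun lam => ?_
    simp [slope_def_field]

/-- First-order perturbative expansion of the LSZ 4-point function:
for `p₁ ≠ p₂`, `q₁ ≠ q₂` one has `G_{|p₁q₁p₂q₂|}(0) = 0` and
`lim_{λ→0⁺} G_{|p₁q₁p₂q₂|}(λ)/λ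
  = −1/[(E_{p₁}+Ẽ_{q₁})(E_{p₂}+Ẽ_{q₁})(E_{p₂}+Ẽ_{q₂})(E_{p₁}+Ẽ_{q₂})]`. -/
theorem lsz_four_point_perturbative
    (N : ℕ) (hN : 1 ≤ N) (E Et : Fin N → ℝ)
    (hE : ∀ n, 0 < E n) (hEt : ∀ n, 0 < Et n)
    (p₁ p₂ q₁ q₂ : Fin N) (hp : p₁ ≠ p₂) (hq : q₁ ≠ q₂) :
    (lszG4 N E Et p₁ q₁ p₂ q₂ 0 = 0) ∧
    Filter.Tendsto
      (fun lam : ℝ => lszG4 N E Et p₁ q₁ p₂ q₂ lam / (lam : ℂ))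
      (nhdsWithin 0 (Set.Ioi 0))
      (nhds (-(1 / ((((E p₁ + Et q₁ : ℝ)) : ℂ) * (((E p₂ + Et q₁ : ℝ)) : ℂ) *
        (((E p₂ + Et q₂ : ℝ)) : ℂ) * (((E p₁ + Et q₂ : ℝ)) : ℂ))))) := by
  have hN0 : (N : ℂ) ≠ 0 := by exact_mod_cast (by lia : N ≠ 0)
  have hM0 := moment_fourField_zero E Et hp hq
  refine ⟨by rw [lszG4_eq hN hE hEt hp hq le_rfl, hM0]; simp, ?_⟩
  have hF := expBdd_fourField N p₁ q₁ p₂ q₂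
  have hZ0 : lszMoment N E Et 0 (fun _ => 1) 0 0 ≠ 0 :=
    Complex.slitPlane_ne_zero (lszMoment_one_mem_slitPlane hN hE hEt le_rfl)
  have hlim := ((tendsto_moment_div hN hE hEt hF hM0).div
    (tendsto_moment hN hE hEt (ExpBdd.const 1)) hZ0).const_mul ((N : ℂ) ^ 3)
  rw [moment_fourField_mul_quartPart hN hE hEt hp hq] at hlim
  have hne : ∀ n m, ((E n + Et m : ℝ) : ℂ) ≠ 0 := fun n m => by
    exact_mod_cast (add_pos (hE n) (hEt m)).ne'
  have h11 := hne p₁ q₁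
  have h21 := hne p₂ q₁
  have h22 := hne p₂ q₂
  have h12 := hne p₁ q₂
  refine Filter.Tendsto.congr' ?_ (hlim.trans_eq ?_)
  · filter_upwards [self_mem_nhdsWithin] with lam hlam
    have hlam' : 0 < lam := hlam
    rw [lszG4_eq hN hE hEt hp hq hlam'.le, Pi.div_apply]
    ring
  · congr 1
    field_simp
end
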